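/- arXiv:1208.4755 — 4 statements merged into one kernel-verified Lean document; each statement's English description precedes it below -/
import Mathlib

section
/- Let K be a Kalton–Roberts constant and let Γ be a nonempty set. Then c₀(Γ) has the ω-SVM property with constant K: for every finite set algebra F and every 1-additive map ν : F → c₀(Γ) there exists a vector measure μ : F → c₀(Γ) such that ‖ν(A) − μ(A)‖ ≤ K for all A ∈ F. -/
/-!
Each coordinate `A ↦ ν A γ` is 1-additive, hence within `K` of a finitely additive `m γ`. The
functions `γ ↦ m γ A` need not vanish at infinity, but `m γ` is only needed at finitely many `γ`:
as `F` is finite and each `ν A` vanishes at infinity, off a finite set of coordinates all the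
values `ν A γ` have norm at most `1`. There the zero measure is within `K` of `ν`, because `K`
bounds the norm of every vector of the unit ball. The argument works for `c₀(Γ, X)` whenever `X`
has the ω-SVM property with constant `K`.
-/

open Cardinal ENNReal

/-- A set algebra: contains `∅`, closed under complements and finite unions. -/
def IsSetAlg {Ω : Type*} (F : Set (Set Ω)) : Prop :=
  ∅ ∈ F ∧ (∀ A ∈ F, Aᶜ ∈ F) ∧ ∀ A ∈ F, ∀ B ∈ F, A ∪ B ∈ F

/-- `ν` is 1-additive on the set algebra `F`. -/
def OneAdd {Ω X : Type*} [SeminormedAddCommGroup X] (F : Set (Set Ω)) (ν : Set Ω → X) : Prop :=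
  ∀ A ∈ F, ∀ B ∈ F, Disjoint A B → ‖ν (A ∪ B) - ν A - ν B‖ ≤ 1

/-- `μ` is a (finitely additive) vector measure on the set algebra `F`. -/
def VectMeas {Ω X : Type*} [AddCommGroup X] (F : Set (Set Ω)) (μ : Set Ω → X) : Prop :=
  ∀ A ∈ F, ∀ B ∈ F, Disjoint A B → μ (A ∪ B) = μ A + μ B

/-- `K` is a Kalton–Roberts constant. -/
def IsKRConst (K : ℝ) : Prop :=
  ∀ (Ω : Type) (F : Set (Set Ω)), IsSetAlg F →
    ∀ ν : Set Ω → ℝ, OneAdd F ν →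
      ∃ μ : Set Ω → ℝ, VectMeas F μ ∧ ∀ A ∈ F, |ν A - μ A| ≤ K

/-- `X` has the SVM property with constant `v` (arbitrary set algebras). -/
def HasSVMBound (X : Type*) [SeminormedAddCommGroup X] (v : ℝ) : Prop :=
  ∀ (Ω : Type) (F : Set (Set Ω)), IsSetAlg F →
    ∀ ν : Set Ω → X, OneAdd F ν →
      ∃ μ : Set Ω → X, VectMeas F μ ∧ ∀ A ∈ F, ‖ν A - μ A‖ ≤ v

/-- `X` has the ω-SVM property with constant `v` (finite set algebras). -/
def HasOmegaSVMBound (X : Type*) [SeminormedAddCommGroup X] (v : ℝ) : Prop :=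
  ∀ (Ω : Type) (F : Set (Set Ω)), IsSetAlg F → F.Finite →
    ∀ ν : Set Ω → X, OneAdd F ν →
      ∃ μ : Set Ω → X, VectMeas F μ ∧ ∀ A ∈ F, ‖ν A - μ A‖ ≤ v

/-- `X` has the κ-SVM property with constant `v` (set algebras of cardinality `< κ`). -/
def HasKappaSVMBound (X : Type*) [SeminormedAddCommGroup X] (κ : Cardinal) (v : ℝ) : Prop :=
  ∀ (Ω : Type) (F : Set (Set Ω)), IsSetAlg F → #(↥F) < κ →
    ∀ ν : Set Ω → X, OneAdd F ν →
      ∃ μ : Set Ω → X, VectMeas F μ ∧ ∀ A ∈ F, ‖ν A - μ A‖ ≤ v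

lemma VectMeas.apply_empty {Ω X : Type*} [AddCommGroup X] {F : Set (Set Ω)} {μ : Set Ω → X}
    (hμ : VectMeas F μ) (hF : ∅ ∈ F) : μ ∅ = 0 := by
  simpa using hμ ∅ hF ∅ hF (Set.disjoint_empty ∅)

lemma oneAdd_const {Ω X : Type*} [SeminormedAddCommGroup X] (F : Set (Set Ω)) {x : X}
    (hx : ‖x‖ ≤ 1) : OneAdd F fun _ => x :=
  fun _ _ _ _ _ => by simpa using hx

lemma IsKRConst.hasOmegaSVMBound_real {K : ℝ} (hK : IsKRConst K) : HasOmegaSVMBound ℝ K :=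
  fun Ω F hF _ => hK Ω F hF

/-- A constant map with value in the unit ball is 1-additive, whereas measures vanish at `∅`. -/
lemma HasOmegaSVMBound.norm_le_of_norm_le_one {X : Type*} [SeminormedAddCommGroup X] {K : ℝ}
    (hX : HasOmegaSVMBound X K) {x : X} (hx : ‖x‖ ≤ 1) : ‖x‖ ≤ K := by
  obtain ⟨μ, hμ, hclose⟩ := hX Unit Set.univ ⟨trivial, fun _ _ => trivial, fun _ _ _ _ => trivial⟩
    Set.finite_univ (fun _ => x) (oneAdd_const _ hx)
  simpa [hμ.apply_empty trivial] using hclose ∅ trivial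

section ZeroAtInfty

open scoped ZeroAtInfty

variable {Γ X : Type*} [TopologicalSpace Γ]

section Norm

variable [SeminormedAddCommGroup X]

lemma norm_apply_le_norm_zeroAtInfty (f : C₀(Γ, X)) (γ : Γ) : ‖f γ‖ ≤ ‖f‖ :=
  f.toBCF.norm_coe_le_norm γ

lemma norm_zeroAtInfty_le {f : C₀(Γ, X)} {C : ℝ} (hC : 0 ≤ C) (h : ∀ γ, ‖f γ‖ ≤ C) : ‖f‖ ≤ C :=
  (BoundedContinuousFunction.norm_le (f := f.toBCF) hC).2 h

lemma OneAdd.zeroAtInfty_apply {Ω : Type*} {F : Set (Set Ω)} {ν : Set Ω → C₀(Γ, X)}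
    (hν : OneAdd F ν) (γ : Γ) : OneAdd F fun A => ν A γ :=
  fun A hA B hB hAB =>
    (norm_apply_le_norm_zeroAtInfty (ν (A ∪ B) - ν A - ν B) γ).trans (hν A hA B hB hAB)

lemma finite_setOf_lt_norm_zeroAtInfty [DiscreteTopology Γ] (f : C₀(Γ, X)) {ε : ℝ} (hε : 0 < ε) :
    {γ | ε < ‖f γ‖}.Finite := by
  have hlim : Filter.Tendsto (fun γ => ‖f γ‖) Filter.cofinite (nhds 0) := by
    simpa [Filter.cocompact_eq_cofinite] using f.zero_at_infty'.norm
  simpa [Filter.eventually_cofinite] using hlim.eventually_le_const hε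

end Norm

section Indicator

variable [DiscreteTopology Γ] [TopologicalSpace X] [Zero X]

/-- The element of `c₀(Γ, X)` that agrees with `g` on the finite set `S` and vanishes elsewhere. -/
noncomputable def zeroAtInftyIndicator (S : Finset Γ) (g : Γ → X) : C₀(Γ, X) where
  toFun := (S : Set Γ).indicator g
  continuous_toFun := continuous_of_discreteTopology
  zero_at_infty' := by
    rw [Filter.cocompact_eq_cofinite]
    have hfin : ((S : Set Γ).indicator g).support.Finite :=
      S.finite_toSet.subset Set.support_indicator_subset
    exact (tendsto_cofinite_pure_iff.2 hfin).mono_right (pure_le_nhds 0)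

lemma zeroAtInftyIndicator_of_mem {S : Finset Γ} {γ : Γ} (hγ : γ ∈ S) (g : Γ → X) :
    zeroAtInftyIndicator S g γ = g γ :=
  Set.indicator_of_mem (Finset.mem_coe.2 hγ) g

lemma zeroAtInftyIndicator_of_notMem {S : Finset Γ} {γ : Γ} (hγ : γ ∉ S) (g : Γ → X) :
    zeroAtInftyIndicator S g γ = 0 :=
  Set.indicator_of_notMem (mt Finset.mem_coe.1 hγ) g

end Indicator

variable [DiscreteTopology Γ]

lemma zeroAtInftyIndicator_add [TopologicalSpace X] [AddZeroClass X] [ContinuousAdd X]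
    (S : Finset Γ) (g h : Γ → X) :
    zeroAtInftyIndicator S (g + h) = zeroAtInftyIndicator S g + zeroAtInftyIndicator S h :=
  DFunLike.coe_injective (Set.indicator_add (S : Set Γ) g h)

lemma vectMeas_zeroAtInftyIndicator [TopologicalSpace X] [AddCommGroup X]
    [IsTopologicalAddGroup X] {Ω : Type*} {F : Set (Set Ω)} {m : Γ → Set Ω → X} (S : Finset Γ)
    (hm : ∀ γ, VectMeas F (m γ)) :
    VectMeas F fun A => zeroAtInftyIndicator S fun γ => m γ A := by
  intro A hA B hB hAB
  rw [← zeroAtInftyIndicator_add]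
  exact congrArg (zeroAtInftyIndicator S) (funext fun γ => hm γ A hA B hB hAB)

variable [SeminormedAddCommGroup X]

lemma exists_finset_forall_notMem_norm_le {ι : Type*} {F : Set ι} (hF : F.Finite)
    (f : ι → C₀(Γ, X)) {ε : ℝ} (hε : 0 < ε) :
    ∃ S : Finset Γ, ∀ γ ∉ S, ∀ i ∈ F, ‖f i γ‖ ≤ ε := by
  have hfin : (⋃ i ∈ F, {γ | ε < ‖f i γ‖}).Finite :=
    hF.biUnion fun i _ => finite_setOf_lt_norm_zeroAtInfty (f i) hε
  refine ⟨hfin.toFinset, fun γ hγ i hi => not_lt.1 fun hlt => hγ ?_⟩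
  exact hfin.mem_toFinset.2 (Set.mem_biUnion hi hlt)

theorem stmt_0_general {K : ℝ} (hX : HasOmegaSVMBound X K) : HasOmegaSVMBound C₀(Γ, X) K := by
  intro Ω F hF hfin ν hν
  choose m hm hclose using fun γ => hX Ω F hF hfin (fun A => ν A γ) (hν.zeroAtInfty_apply γ)
  obtain ⟨S, hS⟩ := exists_finset_forall_notMem_norm_le hfin ν one_pos
  have hK : 0 ≤ K := by simpa using hX.norm_le_of_norm_le_one (x := 0) (by simp)
  refine ⟨fun A => zeroAtInftyIndicator S fun γ => m γ A, vectMeas_zeroAtInftyIndicator S hm,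
    fun A hA => norm_zeroAtInfty_le hK fun γ => ?_⟩
  rw [ZeroAtInftyContinuousMap.sub_apply]
  by_cases hγ : γ ∈ S
  · rw [zeroAtInftyIndicator_of_mem hγ]
    exact hclose γ A hA
  · rw [zeroAtInftyIndicator_of_notMem hγ, sub_zero]
    exact hX.norm_le_of_norm_le_one (hS γ hγ A hA)

end ZeroAtInfty

/-- c₀(Γ) has the ω-SVM property with constant K, where K is a
Kalton–Roberts constant and Γ is a nonempty set (a nonempty discrete space). -/
theorem stmt_0 (K : ℝ) (hK : IsKRConst K)
    (Γ : Type) [TopologicalSpace Γ] [DiscreteTopology Γ] [Nonempty Γ]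
    (Ω : Type) (F : Set (Set Ω)) (hF : IsSetAlg F) (hfin : F.Finite)
    (ν : Set Ω → ZeroAtInftyContinuousMap Γ ℝ) (hν : OneAdd F ν) :
    ∃ μ : Set Ω → ZeroAtInftyContinuousMap Γ ℝ,
      VectMeas F μ ∧ ∀ A ∈ F, ‖ν A - μ A‖ ≤ K :=
  stmt_0_general hK.hasOmegaSVMBound_real Ω F hF hfin ν hν
end

section
/- Every injective Banach space has the SVM property: if X is a Banach space such that for every Banach space E, every closed subspace F ⊆ E and every bounded operator t : F → X there is a bounded operator T : E → X extending t, then there exists a finite constant v such that for every set algebra F and every 1-additive ν : F → X there is a vector measure μ : F → X with ‖ν(A) − μ(A)‖ ≤ v for all A ∈ F. -/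
/-!
An injective space `X` is complemented in `ℓ^∞(Γ)`, where `Γ` is the unit ball of the dual of `X`.
The SVM property passes from `ℝ` to `ℓ^∞(Γ)`, coordinate by coordinate, and from there to `X` by
composing measures with the projection. For `ℝ` it is the theorem of Kalton and Roberts, which rests
on three ideas.

* Duality: by Hahn–Banach, `ν` is within `s` of an affine set function (a measure plus a constant)
  iff `∑ cᵢ ν(Aᵢ) ≤ s ∑ |cᵢ|` whenever `∑ cᵢ = 0` and `∑ cᵢ 1_{Aᵢ} = 0`. Such a condition involves
  finitely many sets at a time, so that finite algebras suffice.
* Self-improvement: if `ν` has additivity defect `δ` and is within `s` of an affine set function, it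
  is also within `31/32 s + 7/4 δ` of one. Otherwise, for the difference `f` of the two, there
  are two random sets with the same cover function `w` (the probability of containing a given point)
  for which the average of `f` is close to `s` and to `-s`. The first set and the complement of the
  second both have large `f`, hence so has their intersection, with cover function
  `w (1 - w) ≤ 1/4`. Intersecting four independent copies of it yields a random set with cover
  function at most `1/256` and with an average of `f` that is still large.
* Concentrators: a random set with cover function at most `1/256` can be approximated by a list of
  `2M` sets covering each point at most `M/128` times. Matchings in a sparse random bipartite graph
  of degree `3` cut each of them into three pieces and reassemble these into only `M` sets. As `f`
  changes by at most `δ` per piece, the average of `f` is at most about `s / 2`, a contradiction.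
-/

open Cardinal ENNReal

/--  is an injective Banach space. -/
def IsInjectiveBanach (X : Type*) [NormedAddCommGroup X] [NormedSpace ℝ X] : Prop :=
  ∀ (E : Type) [NormedAddCommGroup E] [NormedSpace ℝ E] [CompleteSpace E],
    ∀ F : Submodule ℝ E, IsClosed (F : Set E) →
      ∀ t : F →L[ℝ] X, ∃ T : E →L[ℝ] X, ∀ y : F, T y = t y

section Concentrators

open Finset

variable {ι κ β : Type*} [Fintype κ] [Fintype β] [DecidableEq β]

/-- A bipartite multigraph with inputs `ι` and outputs `β`, where `G i k` is the `k`-th neighbour of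
the input `i`, is an `m`-concentrator if Hall's condition holds for every set of at most
`Fintype.card β / m` inputs. It can then route any such set of inputs to distinct outputs. -/
def IsConcentrator (m : ℕ) (G : ι → κ → β) : Prop :=
  ∀ S : Finset ι, m * S.card ≤ Fintype.card β →
    S.card ≤ (S.biUnion fun i ↦ Finset.univ.image (G i)).card

lemma IsConcentrator.exists_injOn [Nonempty κ] {m : ℕ} {G : ι → κ → β} (hG : IsConcentrator m G)
    (S : Finset ι) (hS : m * S.card ≤ Fintype.card β) :
    ∃ k : ι → κ, Set.InjOn (fun i ↦ G i (k i)) S := by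
  classical
  have hall (R : Finset S) : R.card ≤ (R.biUnion fun i ↦ Finset.univ.image (G i)).card := by
    have hle : (R.map (.subtype _)).card ≤ S.card := card_le_card (map_subtype_subset R)
    have hbiUnion : (R.map (.subtype _)).biUnion (fun i ↦ Finset.univ.image (G i)) =
        R.biUnion fun i ↦ Finset.univ.image (G i) := by
      rw [map_eq_image, image_biUnion]
      rfl
    have := hG (R.map (.subtype _)) ((Nat.mul_le_mul_left m hle).trans hS)
    rwa [card_map, hbiUnion] at this
  obtain ⟨f, hf_inj, hf⟩ := (all_card_le_biUnion_card_iff_exists_injective _).1 hall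
  have hedge (i : S) : ∃ k, G i k = f i := by simpa using hf i
  choose k hk using hedge
  refine ⟨fun i ↦ if hi : i ∈ S then k ⟨i, hi⟩ else Classical.arbitrary κ,
    fun i hi j hj hij ↦ ?_⟩
  simp only [mem_coe.1 hi, mem_coe.1 hj, dite_true] at hij
  exact congrArg Subtype.val (hf_inj ((hk ⟨i, hi⟩).symm.trans (hij.trans (hk ⟨j, hj⟩))))

/-- The matchings of `exists_injOn` at the individual points `ω` cut the sets `A i` into pieces
`C (i, k)`, the part of `A i` that is sent along the `k`-th edge. -/
lemma IsConcentrator.exists_pieces {Ω : Type*} [Finite ι] [Nonempty κ] {m : ℕ} {G : ι → κ → β}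
    (hG : IsConcentrator m G) (A : ι → Set Ω)
    (hA : ∀ ω, m * {i | ω ∈ A i}.ncard ≤ Fintype.card β) :
    ∃ C : ι × κ → Set Ω, (∀ i, ⋃ k, C (i, k) = A i) ∧
      (∀ i, Pairwise (Function.onFun Disjoint fun k ↦ C (i, k))) ∧
      ∀ b, {x : ι × κ | G x.1 x.2 = b}.PairwiseDisjoint C := by
  have hmatching (ω : Ω) : ∃ k : ι → κ, Set.InjOn (fun i ↦ G i (k i)) {i | ω ∈ A i} := by
    have hfin := Set.toFinite {i | ω ∈ A i}
    simpa using hG.exists_injOn hfin.toFinset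
      (by simpa only [Set.ncard_eq_toFinset_card _ hfin] using hA ω)
  choose k hk using hmatching
  refine ⟨fun x ↦ {ω | ω ∈ A x.1 ∧ k ω x.1 = x.2}, fun i ↦ ?_, fun i a b hab ↦ ?_, ?_⟩
  · ext ω
    simp
  · exact Set.disjoint_left.2 fun ω ha hb ↦ hab (ha.2.symm.trans hb.2)
  · rintro b ⟨i, a⟩ ha ⟨j, a'⟩ ha' hne
    refine Set.disjoint_left.2 ?_
    rintro ω ⟨hi, hka : k ω i = a⟩ ⟨hj, hka' : k ω j = a'⟩
    subst hka hka'
    obtain rfl : i = j := hk ω hi hj (ha.trans (Eq.symm ha'))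
    exact hne rfl

lemma choose_le_exp_one_mul_div_pow (N n : ℕ) :
    (N.choose n : ℝ) ≤ (Real.exp 1 * (N / n)) ^ n := by
  rcases n.eq_zero_or_pos with rfl | hn
  · simp
  calc (N.choose n : ℝ) ≤ N ^ n / n.factorial := Nat.choose_le_pow_div n N
    _ = (n : ℝ) ^ n / n.factorial * (N / n) ^ n := by
      rw [div_pow]
      field_simp
    _ ≤ Real.exp n * (N / n) ^ n := by
      gcongr
      exact Real.pow_div_factorial_le_exp _ n.cast_nonneg n
    _ = (Real.exp 1 * (N / n)) ^ n := by rw [mul_pow, ← Real.exp_nat_mul, mul_one]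

lemma choose_mul_choose_mul_pow_le {N M n : ℕ} (hN : N ≤ 2 * M) (hn : 128 * n ≤ M) :
    (N.choose n * M.choose n * ((n / M : ℝ) ^ 3) ^ n : ℝ) ≤ (1 / 7) ^ n := by
  rcases n.eq_zero_or_pos with rfl | hn0
  · simp
  have hM : (0 : ℝ) < M := by exact_mod_cast (by omega : 0 < M)
  have hN' : (N : ℝ) ≤ 2 * M := by exact_mod_cast hN
  have hn' : (128 * n : ℝ) ≤ M := by exact_mod_cast hn
  calc (N.choose n * M.choose n * ((n / M : ℝ) ^ 3) ^ n : ℝ)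
      ≤ (Real.exp 1 * (N / n)) ^ n * (Real.exp 1 * (M / n)) ^ n * ((n / M : ℝ) ^ 3) ^ n := by
        gcongr <;> exact choose_le_exp_one_mul_div_pow _ _
    _ ≤ (3 * (2 * M / n)) ^ n * (3 * (M / n)) ^ n * ((n / M : ℝ) ^ 3) ^ n := by
        gcongr <;> exact Real.exp_one_lt_three.le
    _ = (18 * n / M) ^ n := by
        rw [← mul_pow, ← mul_pow]
        congr 1
        field_simp
        norm_num
    _ ≤ (1 / 7) ^ n := by
        refine pow_le_pow_left₀ (by positivity) ?_ n
        rw [div_le_div_iff₀ hM (by norm_num)]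
        linarith

lemma card_filter_forall_mem {α : Type*} [Fintype ι] [DecidableEq ι] [Fintype α] [DecidableEq α]
    [Nonempty α] (S : Finset ι) (U : Finset α) :
    (({g : ι → α | ∀ i ∈ S, g i ∈ U} : Finset _).card : ℝ) =
      (U.card / Fintype.card α) ^ S.card * Fintype.card α ^ Fintype.card ι := by
  have hpi : ({g : ι → α | ∀ i ∈ S, g i ∈ U} : Finset (ι → α)) =
      Fintype.piFinset fun i ↦ if i ∈ S then U else Finset.univ := by
    ext g
    simp only [mem_filter_univ, Fintype.mem_piFinset]
    refine forall_congr' fun i ↦ ?_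
    split_ifs with hi <;> simp [hi]
  have hα : (Fintype.card α : ℝ) ≠ 0 := by simp
  rw [hpi, Fintype.card_piFinset, ← card_add_card_compl S, pow_add, div_pow, ← mul_assoc,
    div_mul_cancel₀ _ (pow_ne_zero _ hα)]
  simp [apply_ite card, prod_ite, filter_not, compl_eq_univ_sdiff]

/-- The graphs of degree `3` that send all edges of some `n` inputs into some `n` outputs. Every
graph that violates Hall's condition for a set of `n` inputs is of this kind. -/
def trappingGraphs (ι β : Type*) [Fintype ι] [DecidableEq ι] [Fintype β] [DecidableEq β] (n : ℕ) :
    Finset (ι → Fin 3 → β) :=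
  (powersetCard n Finset.univ ×ˢ powersetCard n Finset.univ).biUnion fun ST : Finset ι × Finset β ↦
    {G | ∀ i ∈ ST.1, G i ∈ Fintype.piFinset fun _ ↦ ST.2}

lemma mem_trappingGraphs_of_card_biUnion_lt [Fintype ι] [DecidableEq ι] {G : ι → Fin 3 → β}
    {S : Finset ι} (hS : S.card ≤ Fintype.card β)
    (hlt : (S.biUnion fun i ↦ Finset.univ.image (G i)).card < S.card) :
    G ∈ trappingGraphs ι β S.card := by
  obtain ⟨T, hNT, -, hT⟩ := exists_subsuperset_card_eq
    (subset_univ (S.biUnion fun i ↦ Finset.univ.image (G i))) hlt.le (by rwa [card_univ])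
  refine mem_biUnion.2 ⟨(S, T), by simp [hT], ?_⟩
  simp only [mem_filter_univ, Fintype.mem_piFinset]
  exact fun i hi k ↦ hNT (mem_biUnion.2 ⟨i, hi, mem_image_of_mem _ (mem_univ k)⟩)

lemma card_trappingGraphs_le [Fintype ι] [DecidableEq ι] [Nonempty β]
    (hι : Fintype.card ι ≤ 2 * Fintype.card β) {n : ℕ} (hn : 128 * n ≤ Fintype.card β) :
    ((trappingGraphs ι β n).card : ℝ) ≤ (1 / 7) ^ n * Fintype.card (ι → Fin 3 → β) := by
  let pairs : Finset (Finset ι × Finset β) :=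
    powersetCard n Finset.univ ×ˢ powersetCard n Finset.univ
  have htrapped : ∀ ST ∈ pairs,
      (({G | ∀ i ∈ ST.1, G i ∈ Fintype.piFinset fun _ ↦ ST.2} :
        Finset (ι → Fin 3 → β)).card : ℝ) =
      ((n / Fintype.card β : ℝ) ^ 3) ^ n * Fintype.card (ι → Fin 3 → β) := by
    rintro ⟨S, T⟩ hST
    obtain ⟨hS, hT⟩ : S.card = n ∧ T.card = n := by simpa [pairs] using hST
    rw [card_filter_forall_mem, hS]
    simp [div_pow, hT]
  calc ((trappingGraphs ι β n).card : ℝ)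
      ≤ ∑ ST ∈ pairs, (({G | ∀ i ∈ ST.1, G i ∈ Fintype.piFinset fun _ ↦ ST.2} :
          Finset (ι → Fin 3 → β)).card : ℝ) := by exact_mod_cast card_biUnion_le
    _ = ((Fintype.card ι).choose n * (Fintype.card β).choose n *
          ((n / Fintype.card β : ℝ) ^ 3) ^ n) * Fintype.card (ι → Fin 3 → β) := by
        rw [sum_congr rfl htrapped]
        simp [pairs, mul_assoc]
    _ ≤ _ := by
        gcongr
        exact choose_mul_choose_mul_pow_le hι hn

/-- A random graph is a concentrator: by the union bound, it violates Hall's condition with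
probability at most `∑ n ≥ 1, 7⁻¹ ^ n = 1 / 6`. -/
theorem exists_isConcentrator [Fintype ι] [Nonempty β]
    (hι : Fintype.card ι ≤ 2 * Fintype.card β) :
    ∃ G : ι → Fin 3 → β, IsConcentrator 128 G := by
  classical
  by_contra! hbad
  let sizes := Ico 1 (Fintype.card β / 128 + 1)
  have hcover : Finset.univ ⊆ sizes.biUnion (trappingGraphs ι β) := by
    intro G _
    obtain ⟨S, hS, hlt⟩ : ∃ S : Finset ι, 128 * S.card ≤ Fintype.card β ∧
        (S.biUnion fun i ↦ Finset.univ.image (G i)).card < S.card := by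
      simpa [IsConcentrator] using hbad G
    have hsize : S.card ∈ sizes := mem_Ico.2 (by omega)
    exact mem_biUnion.2 ⟨S.card, hsize, mem_trappingGraphs_of_card_biUnion_lt (by omega) hlt⟩
  have hpos : (0 : ℝ) < Fintype.card (ι → Fin 3 → β) := by exact_mod_cast Fintype.card_pos
  have hgeom : ∑ n ∈ sizes, (1 / 7 : ℝ) ^ n ≤ 1 / 6 :=
    (geom_sum_Ico_le_of_lt_one (by norm_num) (by norm_num)).trans_eq (by norm_num)
  have hcount : (Fintype.card (ι → Fin 3 → β) : ℝ) ≤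
      1 / 6 * Fintype.card (ι → Fin 3 → β) := by
    calc (Fintype.card (ι → Fin 3 → β) : ℝ)
        ≤ ∑ n ∈ sizes, ((trappingGraphs ι β n).card : ℝ) := by
          exact_mod_cast (card_le_card hcover).trans card_biUnion_le
      _ ≤ ∑ n ∈ sizes, (1 / 7 : ℝ) ^ n * Fintype.card (ι → Fin 3 → β) := by
          refine sum_le_sum fun n hn ↦ card_trappingGraphs_le hι ?_
          have := (mem_Ico.1 hn).2
          omega
      _ ≤ 1 / 6 * Fintype.card (ι → Fin 3 → β) := by rw [← sum_mul]; gcongr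
  linarith

end Concentrators

section AlmostAffine

open Filter

variable {Ω : Type*} {δ s : ℝ} {f : Set Ω → ℝ}

/-- A set function is almost affine with defect `δ` if subtracting its value at `∅` makes it
additive up to `δ`. -/
def AlmostAffine (δ : ℝ) (f : Set Ω → ℝ) : Prop :=
  ∀ A B, Disjoint A B → |f (A ∪ B) + f ∅ - f A - f B| ≤ δ

namespace AlmostAffine

lemma nonneg (hf : AlmostAffine δ f) : 0 ≤ δ :=
  (abs_nonneg _).trans (hf ∅ ∅ disjoint_bot_left)

lemma neg (hf : AlmostAffine δ f) : AlmostAffine δ (-f) := fun A B hAB ↦ by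
  rw [← abs_neg]
  refine (hf A B hAB).trans_eq' (congrArg abs ?_)
  simp only [Pi.neg_apply]
  ring

lemma le_compl (hf : AlmostAffine δ f) (A : Set Ω) :
    f Set.univ + f ∅ - f A - δ ≤ f Aᶜ := by
  have h := abs_le.1 (hf A Aᶜ disjoint_compl_right)
  rw [Set.union_compl_self] at h
  linarith [h.2]

lemma le_inter (hf : AlmostAffine δ f) (A B : Set Ω) :
    f A + f B - f (A ∪ B) - 2 * δ ≤ f (A ∩ B) := by
  have hA := abs_le.1 (hf (A \ B) (A ∩ B) (Set.disjoint_sdiff_inter))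
  have hAB := abs_le.1 (hf (A \ B) B Set.disjoint_sdiff_left)
  rw [Set.sdiff_union_inter] at hA
  rw [Set.sdiff_union_self] at hAB
  linarith [hA.2, hAB.1]

lemma abs_biUnion_sub_sum_le {ι : Type*} (hf : AlmostAffine δ f) (C : ι → Set Ω) (t : Finset ι)
    (hC : (t : Set ι).PairwiseDisjoint C) :
    |f (⋃ x ∈ t, C x) - f ∅ - ∑ x ∈ t, (f (C x) - f ∅)| ≤ δ * t.card := by
  classical
  induction t using Finset.induction_on with
  | empty => simp
  | insert a t ha ih =>
    have hdisj : Disjoint (C a) (⋃ x ∈ t, C x) := Set.disjoint_iUnion₂_right.2 fun x hx ↦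
      hC (by simp) (by simp [hx]) fun h ↦ ha (h ▸ hx)
    rw [Finset.set_biUnion_insert, Finset.sum_insert ha, Finset.card_insert_of_notMem ha,
      Nat.cast_succ, mul_add_one, add_comm (δ * _)]
    refine (abs_add_le _ _).trans' (le_of_eq (congrArg abs ?_)) |>.trans
      (add_le_add (hf _ _ hdisj) (ih (hC.subset (by simp))))
    ring

/-- Cutting and reassembling the sets along the edges of the concentrator changes the sum of
`f - f ∅` by at most `δ` per edge, once for each of the two operations. -/
lemma sum_le_of_isConcentrator {ι κ β : Type*} [Fintype ι] [Fintype κ] [Nonempty κ] [Fintype β]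
    [DecidableEq β] (hf : AlmostAffine δ f) (hfs : ∀ A, f A ≤ s) {m : ℕ} {G : ι → κ → β}
    (hG : IsConcentrator m G) (A : ι → Set Ω)
    (hA : ∀ ω, m * {i | ω ∈ A i}.ncard ≤ Fintype.card β) :
    ∑ i, (f (A i) - f ∅) ≤
      Fintype.card β * (s - f ∅) + 2 * δ * (Fintype.card ι * Fintype.card κ) := by
  classical
  obtain ⟨C, hC, hCinput, hCoutput⟩ := hG.exists_pieces A hA
  have hinput (i : ι) :
      f (A i) - f ∅ ≤ ∑ k, (f (C (i, k)) - f ∅) + δ * Fintype.card κ := by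
    have h := hf.abs_biUnion_sub_sum_le (fun k ↦ C (i, k)) Finset.univ
      fun k _ l _ hkl ↦ hCinput i hkl
    simp only [Finset.mem_univ, Set.iUnion_true, hC, Finset.card_univ] at h
    linarith [(abs_le.1 h).2]
  have houtput (b : β) : ∑ x : ι × κ with G x.1 x.2 = b, (f (C x) - f ∅) ≤
      (s - f ∅) + δ * ({x : ι × κ | G x.1 x.2 = b} : Finset (ι × κ)).card := by
    have h := hf.abs_biUnion_sub_sum_le C ({x : ι × κ | G x.1 x.2 = b} : Finset (ι × κ))
      (by simpa using hCoutput b)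
    linarith [(abs_le.1 h).1, hfs (⋃ x ∈ ({x : ι × κ | G x.1 x.2 = b} : Finset (ι × κ)), C x)]
  calc ∑ i, (f (A i) - f ∅)
      ≤ ∑ i, (∑ k, (f (C (i, k)) - f ∅) + δ * Fintype.card κ) :=
        Finset.sum_le_sum fun i _ ↦ hinput i
    _ = ∑ b, ∑ x : ι × κ with G x.1 x.2 = b, (f (C x) - f ∅) +
          δ * (Fintype.card ι * Fintype.card κ) := by
        rw [Finset.sum_fiberwise, Fintype.sum_prod_type, Finset.sum_add_distrib,
          Finset.sum_const, Finset.card_univ, nsmul_eq_mul]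
        ring
    _ ≤ ∑ b, ((s - f ∅) + δ * ({x : ι × κ | G x.1 x.2 = b} : Finset (ι × κ)).card) +
          δ * (Fintype.card ι * Fintype.card κ) :=
        add_le_add_left (Finset.sum_le_sum fun b _ ↦ houtput b) _
    _ = Fintype.card β * (s - f ∅) + 2 * δ * (Fintype.card ι * Fintype.card κ) := by
        rw [Finset.sum_add_distrib, ← Finset.mul_sum, ← Nat.cast_sum,
          ← Finset.card_eq_sum_card_fiberwise fun _ _ ↦ Finset.mem_univ _]
        simp only [Finset.sum_const, Finset.card_univ, Fintype.card_prod, nsmul_eq_mul,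
          Nat.cast_mul]
        ring

lemma sum_mul_le_of_sparse {ι : Type*} [Fintype ι] (hf : AlmostAffine δ f) (hfs : ∀ A, f A ≤ s)
    {M : ℕ} (hM : 0 < M) (n : ι → ℕ) (hn : ∑ i, n i ≤ 2 * M) (A : ι → Set Ω)
    (hA : ∀ ω, 128 * ∑ i, (A i).indicator (fun _ ↦ n i) ω ≤ M) :
    ∑ i, n i * (f (A i) - f ∅) ≤ M * (s - f ∅) + 12 * δ * M := by
  classical
  have : Nonempty (Fin M) := ⟨⟨0, hM⟩⟩
  have hcard : Fintype.card (Σ i, Fin (n i)) = ∑ i, n i := by simp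
  obtain ⟨G, hG⟩ := exists_isConcentrator (ι := Σ i, Fin (n i)) (β := Fin M)
    (by rwa [hcard, Fintype.card_fin])
  have hcover (ω : Ω) : {x : Σ i, Fin (n i) | ω ∈ A x.1}.ncard =
      ∑ i, (A i).indicator (fun _ ↦ n i) ω := by
    have hsigma : {x : Σ i, Fin (n i) | ω ∈ A x.1} =
        (({i | ω ∈ A i} : Finset ι).sigma fun _ ↦ Finset.univ : Finset (Σ i, Fin (n i))) := by
      ext
      simp
    rw [hsigma, Set.ncard_coe_finset, Finset.card_sigma]
    simp [Set.indicator_apply, Finset.sum_ite]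
  have hsum := hf.sum_le_of_isConcentrator hfs hG (fun x ↦ A x.1) fun ω ↦ by
    simpa only [hcover, Fintype.card_fin] using hA ω
  have hδ : δ * (∑ i, n i : ℕ) ≤ δ * (2 * M) :=
    mul_le_mul_of_nonneg_left (by exact_mod_cast hn) hf.nonneg
  rw [Fintype.sum_sigma, hcard] at hsum
  simp only [Finset.sum_const, Finset.card_univ, Fintype.card_fin, nsmul_eq_mul,
    Nat.cast_ofNat] at hsum
  linarith

lemma sum_floor_mul_le_of_cover_le {ι : Type*} [Fintype ι] (hf : AlmostAffine δ f)
    (hfs : ∀ A, f A ≤ s) {p : ι → ℝ} (hp : ∀ i, 0 ≤ p i) (hp1 : ∑ i, p i = 1) (A : ι → Set Ω)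
    (hA : ∀ ω, ∑ i, p i * (A i).indicator 1 ω ≤ 1 / 256) {M : ℕ} (hM : 0 < M) :
    ∑ i, ⌊p i * (2 * M : ℝ)⌋₊ * (f (A i) - f ∅) ≤ M * (s - f ∅) + 12 * δ * M := by
  have hfloor (i : ι) : (⌊p i * (2 * M : ℝ)⌋₊ : ℝ) ≤ p i * (2 * M) :=
    Nat.floor_le (mul_nonneg (hp i) (by positivity))
  have hn : ((∑ i, ⌊p i * (2 * M : ℝ)⌋₊ : ℕ) : ℝ) ≤ (2 * M : ℕ) := by
    push_cast
    calc ∑ i, (⌊p i * (2 * M : ℝ)⌋₊ : ℝ) ≤ ∑ i, p i * (2 * M) :=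
          Finset.sum_le_sum fun i _ ↦ hfloor i
      _ = 2 * M := by rw [← Finset.sum_mul, hp1, one_mul]
  have hcover (ω : Ω) :
      ((128 * ∑ i, (A i).indicator (fun _ ↦ ⌊p i * (2 * M : ℝ)⌋₊) ω : ℕ) : ℝ) ≤ M := by
    push_cast
    calc 128 * ∑ i, (((A i).indicator (fun _ ↦ ⌊p i * (2 * M : ℝ)⌋₊) ω : ℕ) : ℝ)
        ≤ 128 * ∑ i, p i * (A i).indicator 1 ω * (2 * M) := by
          gcongr with i
          by_cases hi : ω ∈ A i <;> simp [hi, hfloor]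
      _ = 256 * (∑ i, p i * (A i).indicator 1 ω) * M := by rw [← Finset.sum_mul]; ring
      _ ≤ 256 * (1 / 256) * M := by gcongr; exact hA ω
      _ = M := by ring
  exact hf.sum_mul_le_of_sparse hfs hM _ (Nat.cast_le.1 hn) A fun ω ↦ Nat.cast_le.1 (hcover ω)

/-- Replace each weight `p i` by the multiplicity `⌊p i * 2M⌋` and let `M → ∞`. -/
lemma sum_mul_le_of_cover_le {ι : Type*} [Fintype ι] (hf : AlmostAffine δ f) (hfs : ∀ A, f A ≤ s)
    {p : ι → ℝ} (hp : ∀ i, 0 ≤ p i) (hp1 : ∑ i, p i = 1) (A : ι → Set Ω)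
    (hA : ∀ ω, ∑ i, p i * (A i).indicator 1 ω ≤ 1 / 256) :
    ∑ i, p i * f (A i) ≤ (s + f ∅) / 2 + 6 * δ := by
  have happrox (M : ℕ) (hM : 0 < M) :
      ∑ i, (⌊p i * (2 * M : ℝ)⌋₊ / (2 * M) : ℝ) * (f (A i) - f ∅) ≤ (s - f ∅) / 2 + 6 * δ := by
    have : (0 : ℝ) < M := by exact_mod_cast hM
    simp only [div_mul_eq_mul_div]
    rw [← Finset.sum_div, div_le_iff₀ (by positivity)]
    linarith [hf.sum_floor_mul_le_of_cover_le hfs hp hp1 A hA hM]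
  have hlim : Tendsto (fun M : ℕ ↦ ∑ i, (⌊p i * (2 * M : ℝ)⌋₊ / (2 * M) : ℝ) * (f (A i) - f ∅))
      atTop (nhds (∑ i, p i * (f (A i) - f ∅))) :=
    tendsto_finsetSum _ fun i _ ↦ .mul_const _ <| (tendsto_nat_floor_mul_div_atTop (hp i)).comp <|
      tendsto_natCast_atTop_atTop.const_mul_atTop (by norm_num)
  have hle := le_of_tendsto hlim (eventually_atTop.2 ⟨1, happrox⟩)
  simp only [mul_sub, Finset.sum_sub_distrib, ← Finset.sum_mul, hp1] at hle
  linarith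

end AlmostAffine

end AlmostAffine

section CoverHull

variable {Ω : Type*} {δ s : ℝ} {f : Set Ω → ℝ} {p q : (Ω → ℝ) × ℝ}

/-- The convex hull of the hypograph of `f`, where sets are identified with their indicators:
`(w, a) ∈ coverHull f` if there is a finitely supported random set that covers each point `ω` with
probability `w ω`, and for which the expected value of `f` is at least `a`. -/
def coverHull (f : Set Ω → ℝ) : Set ((Ω → ℝ) × ℝ) :=
  convexHull ℝ {p | ∃ A : Set Ω, p.1 = A.indicator 1 ∧ p.2 ≤ f A}

lemma centerMass_mem_coverHull {ι : Type*} {t : Finset ι} {p : ι → ℝ} (hp : ∀ i ∈ t, 0 ≤ p i)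
    (hpos : 0 < ∑ i ∈ t, p i) (A : ι → Set Ω) (f : Set Ω → ℝ) :
    ((∑ i ∈ t, p i)⁻¹ • ∑ i ∈ t, p i • (A i).indicator 1,
      (∑ i ∈ t, p i)⁻¹ * ∑ i ∈ t, p i * f (A i)) ∈ coverHull f := by
  have hmem := t.centerMass_mem_convexHull hp hpos (z := fun i ↦ ((A i).indicator 1, f (A i)))
    (s := {p : (Ω → ℝ) × ℝ | ∃ A : Set Ω, p.1 = A.indicator 1 ∧ p.2 ≤ f A})
    fun i _ ↦ ⟨A i, rfl, le_rfl⟩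
  simpa only [coverHull, Finset.centerMass, Prod.smul_mk, ← prod_mk_sum, smul_eq_mul] using hmem

lemma fst_mem_Icc_of_mem_coverHull (hp : p ∈ coverHull f) : p.1 ∈ Set.Icc (0 : Ω → ℝ) 1 := by
  refine convexHull_min ?_ ((convex_Icc (0 : Ω → ℝ) 1).linear_preimage (LinearMap.fst ℝ _ _)) hp
  rintro q ⟨A, hA, -⟩
  simp only [Set.mem_preimage, LinearMap.fst_apply, hA]
  exact ⟨Set.indicator_nonneg fun _ _ ↦ zero_le_one,
    Set.indicator_le_self' fun _ _ ↦ zero_le_one⟩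

lemma snd_le_of_mem_coverHull (hfs : ∀ A, f A ≤ s) (hp : p ∈ coverHull f) : p.2 ≤ s := by
  refine convexHull_min ?_ ((convex_Iic s).linear_preimage (LinearMap.snd ℝ _ _)) hp
  rintro q ⟨A, -, hA⟩
  exact hA.trans (hfs A)

lemma convex_setOf_add_mul_add_mem {K : Set ((Ω → ℝ) × ℝ)} (hK : Convex ℝ K) (u v : Ω → ℝ)
    (c : ℝ) : Convex ℝ {p : (Ω → ℝ) × ℝ | (u + v * p.1, c + p.2) ∈ K} := by
  intro p hp q hq α β hα hβ hαβ
  refine (congrArg (· ∈ K) (Prod.ext (funext fun ω ↦ ?_) ?_)).mpr (hK hp hq hα hβ hαβ)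
  · simp only [Prod.fst_add, Prod.smul_fst, Pi.add_apply, Pi.mul_apply, Pi.smul_apply, smul_eq_mul]
    linear_combination -u ω * hαβ
  · simp only [Prod.snd_add, Prod.smul_snd, smul_eq_mul]
    linear_combination -c * hαβ

namespace AlmostAffine

lemma mul_mem_coverHull (hf : AlmostAffine δ f) (hfs : ∀ A, f A ≤ s) (hp : p ∈ coverHull f)
    (hq : q ∈ coverHull f) : (p.1 * q.1, p.2 + q.2 - s - 2 * δ) ∈ coverHull f := by
  have hset {A : Set Ω} {a : ℝ} (ha : a ≤ f A) {q : (Ω → ℝ) × ℝ} (hq : q ∈ coverHull f) :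
      (0 + A.indicator 1 * q.1, a - s - 2 * δ + q.2) ∈ coverHull f := by
    refine convexHull_min ?_ (convex_setOf_add_mul_add_mem (convex_convexHull ℝ _) _ _ _) hq
    rintro q ⟨B, hB, hqB⟩
    refine subset_convexHull ℝ _ ⟨A ∩ B, ?_, ?_⟩
    · rw [hB, zero_add, Set.inter_indicator_one]
    · linarith [hf.le_inter A B, hfs (A ∪ B)]
  have hmem : (0 + q.1 * p.1, q.2 - s - 2 * δ + p.2) ∈ coverHull f := by
    refine convexHull_min ?_ (convex_setOf_add_mul_add_mem (convex_convexHull ℝ _) _ _ _) hp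
    rintro p ⟨A, hA, hpA⟩
    have hinter := hset hpA hq
    rwa [← hA, mul_comm, show p.2 - s - 2 * δ + q.2 = q.2 - s - 2 * δ + p.2 by ring] at hinter
  convert hmem using 2
  · rw [zero_add, mul_comm]
  · ring

lemma one_sub_mem_coverHull (hf : AlmostAffine δ f) (hp : p ∈ coverHull (-f)) :
    (1 - p.1, f Set.univ + f ∅ - δ + p.2) ∈ coverHull f := by
  have hmem : (1 + (-1) * p.1, f Set.univ + f ∅ - δ + p.2) ∈ coverHull f := by
    refine convexHull_min ?_ (convex_setOf_add_mul_add_mem (convex_convexHull ℝ _) _ _ _) hp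
    rintro p ⟨A, hA, hpA⟩
    refine subset_convexHull ℝ _ ⟨Aᶜ, ?_, ?_⟩
    · rw [Set.indicator_compl, hA]
      ring
    · have hpA : p.2 ≤ -f A := hpA
      linarith [hf.le_compl A]
  convert hmem using 2
  ring

lemma snd_le_of_mem_coverHull_of_fst_le (hf : AlmostAffine δ f) (hfs : ∀ A, f A ≤ s)
    (hp : p ∈ coverHull f) (hle : ∀ ω, p.1 ω ≤ 1 / 256) : p.2 ≤ (s + f ∅) / 2 + 6 * δ := by
  obtain ⟨ι, _, c, z, hc, hc1, hz, rfl⟩ := mem_convexHull_iff_exists_fintype.1 hp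
  choose A hA hzA using hz
  have hcover (ω : Ω) : ∑ i, c i * (A i).indicator 1 ω ≤ 1 / 256 := by
    simpa [Prod.fst_sum, hA] using hle ω
  calc (∑ i, c i • z i).2 = ∑ i, c i * (z i).2 := by simp [Prod.snd_sum]
    _ ≤ ∑ i, c i * f (A i) := by
      gcongr with i
      exacts [hc i, hzA i]
    _ ≤ (s + f ∅) / 2 + 6 * δ := hf.sum_mul_le_of_cover_le hfs hc hc1 A hcover

lemma add_le_of_mem_coverHull_of_empty_nonpos (hf : AlmostAffine δ f) (hfs : ∀ A, |f A| ≤ s)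
    (hempty : f ∅ ≤ 0) {w : Ω → ℝ} {a b : ℝ} (ha : (w, a) ∈ coverHull f)
    (hb : (w, b) ∈ coverHull (-f)) : a + b ≤ 31 / 16 * s + 7 / 2 * δ := by
  have hfs_le (A : Set Ω) : f A ≤ s := (abs_le.1 (hfs A)).2
  have hw : w ∈ Set.Icc 0 1 := fst_mem_Icc_of_mem_coverHull ha
  -- `w * (1 - w)` is the cover function of `A ∩ Bᶜ` for independent random sets `A` and `B`.
  have hquarter (ω : Ω) : w ω * (1 - w ω) ≤ 1 / 4 := by linarith [sq_nonneg (w ω - 1 / 2)]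
  have hnonneg (ω : Ω) : 0 ≤ w ω * (1 - w ω) := mul_nonneg (hw.1 ω) (sub_nonneg.2 (hw.2 ω))
  have hinter := hf.mul_mem_coverHull hfs_le ha (hf.one_sub_mem_coverHull hb)
  have hsq := hf.mul_mem_coverHull hfs_le hinter hinter
  have hfourth := hf.mul_mem_coverHull hfs_le hsq hsq
  have hsparse := hf.snd_le_of_mem_coverHull_of_fst_le hfs_le hfourth fun ω ↦ by
    calc w ω * (1 - w ω) * (w ω * (1 - w ω)) * (w ω * (1 - w ω) * (w ω * (1 - w ω)))
        = (w ω * (1 - w ω)) ^ 4 := by ring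
      _ ≤ (1 / 4) ^ 4 := pow_le_pow_left₀ (hnonneg ω) (hquarter ω) 4
      _ = 1 / 256 := by norm_num
  have huniv : a ≤ f Set.univ + f ∅ + s + δ := by
    refine snd_le_of_mem_coverHull (fun A ↦ ?_) ha
    have hcompl : -f Set.univ - f ∅ + f A - δ ≤ -f Aᶜ := by
      simpa [← sub_eq_add_neg] using hf.neg.le_compl A
    linarith [(abs_le.1 (hfs Aᶜ)).1]
  have hbs : b ≤ s := snd_le_of_mem_coverHull (fun A ↦ neg_le.1 (abs_le.1 (hfs A)).1) hb
  dsimp only at hsparse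
  linarith

lemma add_le_of_mem_coverHull (hf : AlmostAffine δ f) (hfs : ∀ A, |f A| ≤ s) {w : Ω → ℝ}
    {a b : ℝ} (ha : (w, a) ∈ coverHull f) (hb : (w, b) ∈ coverHull (-f)) :
    a + b ≤ 31 / 16 * s + 7 / 2 * δ := by
  rcases le_total (f ∅) 0 with h | h
  · exact hf.add_le_of_mem_coverHull_of_empty_nonpos hfs h ha hb
  · rw [add_comm]
    exact hf.neg.add_le_of_mem_coverHull_of_empty_nonpos (by simpa using hfs) (by simpa using h)
      hb (by rwa [neg_neg])

lemma sum_mul_sub_sum_mul_le {ι : Type*} (hf : AlmostAffine δ f) (hfs : ∀ A, |f A| ≤ s)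
    {t : Finset ι} {p q : ι → ℝ} {A : ι → Set Ω} (hp : ∀ i ∈ t, 0 ≤ p i) (hq : ∀ i ∈ t, 0 ≤ q i)
    (hpq : ∑ i ∈ t, p i = ∑ i ∈ t, q i)
    (hcover : ∑ i ∈ t, p i • (A i).indicator (1 : Ω → ℝ) = ∑ i ∈ t, q i • (A i).indicator 1) :
    ∑ i ∈ t, p i * f (A i) - ∑ i ∈ t, q i * f (A i) ≤
      (31 / 16 * s + 7 / 2 * δ) * ∑ i ∈ t, p i := by
  rcases (Finset.sum_nonneg hp).eq_or_lt' with hzero | hpos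
  · have hp0 := (Finset.sum_eq_zero_iff_of_nonneg hp).1 hzero
    have hq0 := (Finset.sum_eq_zero_iff_of_nonneg hq).1 (hpq ▸ hzero)
    rw [hzero, Finset.sum_eq_zero fun i hi ↦ by rw [hp0 i hi, zero_mul],
      Finset.sum_eq_zero fun i hi ↦ by rw [hq0 i hi, zero_mul]]
    simp
  have hmem_p := centerMass_mem_coverHull hp hpos A f
  have hmem_q := centerMass_mem_coverHull hq (hpq ▸ hpos) A (-f)
  rw [← hcover, ← hpq] at hmem_q
  have hle := hf.add_le_of_mem_coverHull hfs hmem_p hmem_q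
  rw [← mul_add, inv_mul_le_iff₀ hpos] at hle
  simp only [Pi.neg_apply, mul_neg, Finset.sum_neg_distrib] at hle
  linarith

lemma sum_mul_le_of_sum_eq_zero {ι : Type*} (hf : AlmostAffine δ f) (hfs : ∀ A, |f A| ≤ s)
    {t : Finset ι} {c : ι → ℝ} {A : ι → Set Ω} (hc : ∑ i ∈ t, c i = 0)
    (hcA : ∑ i ∈ t, c i • (A i).indicator (1 : Ω → ℝ) = 0) :
    ∑ i ∈ t, c i * f (A i) ≤ (31 / 32 * s + 7 / 4 * δ) * ∑ i ∈ t, |c i| := by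
  have htotal : ∑ i ∈ t, (c i)⁺ = ∑ i ∈ t, (c i)⁻ := by
    simp only [← sub_eq_zero, ← Finset.sum_sub_distrib, posPart_sub_negPart, hc]
  have hcover : ∑ i ∈ t, (c i)⁺ • (A i).indicator (1 : Ω → ℝ) =
      ∑ i ∈ t, (c i)⁻ • (A i).indicator 1 := by
    rw [← sub_eq_zero, ← Finset.sum_sub_distrib]
    simpa only [← sub_smul, posPart_sub_negPart] using hcA
  calc ∑ i ∈ t, c i * f (A i) = ∑ i ∈ t, (c i)⁺ * f (A i) - ∑ i ∈ t, (c i)⁻ * f (A i) := by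
        simp only [← Finset.sum_sub_distrib, ← sub_mul, posPart_sub_negPart]
    _ ≤ (31 / 16 * s + 7 / 2 * δ) * ∑ i ∈ t, (c i)⁺ :=
        hf.sum_mul_sub_sum_mul_le hfs (fun i _ ↦ posPart_nonneg _) (fun i _ ↦ negPart_nonneg _)
          htotal hcover
    _ = (31 / 32 * s + 7 / 4 * δ) * ∑ i ∈ t, |c i| := by
        simp only [← posPart_add_negPart, Finset.sum_add_distrib, ← htotal]
        ring

end AlmostAffine

end CoverHull

section Duality

variable {I W : Type*} [AddCommGroup W] [Module ℝ W] {v : I → W} {ν : I → ℝ} {s : ℝ}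

lemma sum_abs_add_le (c d : I →₀ ℝ) :
    ((c + d).sum fun _ x ↦ |x|) ≤ (c.sum fun _ x ↦ |x|) + d.sum fun _ x ↦ |x| := by
  classical
  rw [Finsupp.sum_of_support_subset _ Finsupp.support_add _ fun _ _ ↦ abs_zero,
    Finsupp.sum_of_support_subset c Finset.subset_union_left _ fun _ _ ↦ abs_zero,
    Finsupp.sum_of_support_subset d Finset.subset_union_right _ fun _ _ ↦ abs_zero,
    ← Finset.sum_add_distrib]
  exact Finset.sum_le_sum fun i _ ↦ abs_add_le (c i) (d i)

lemma sum_abs_smul {r : ℝ} (hr : 0 < r) (c : I →₀ ℝ) :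
    ((r • c).sum fun _ x ↦ |x|) = r * c.sum fun _ x ↦ |x| := by
  rw [Finsupp.sum_smul_index fun _ ↦ abs_zero, Finsupp.mul_sum]
  simp only [abs_mul, abs_of_pos hr]

/-- Hahn–Banach with `s` times the `ℓ¹` norm on `I →₀ ℝ`: the functional `ν`, restricted to the
linear relations among the vectors `v i`, has an extension `g` of norm at most `s`, and `ν - g`,
which annihilates the relations, factors through the span of the `v i`. -/
theorem exists_linearMap_abs_sub_le (hs : 0 ≤ s)
    (h : ∀ c : I →₀ ℝ, Finsupp.linearCombination ℝ v c = 0 →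
      Finsupp.linearCombination ℝ ν c ≤ s * c.sum fun _ x ↦ |x|) :
    ∃ ℓ : W →ₗ[ℝ] ℝ, ∀ i, |ν i - ℓ (v i)| ≤ s := by
  let relations := LinearMap.ker (Finsupp.linearCombination ℝ v)
  obtain ⟨g, hg_eq, hg_le⟩ := exists_extension_of_le_sublinear
    ⟨relations, (Finsupp.linearCombination ℝ ν).comp relations.subtype⟩
    (fun c ↦ s * c.sum fun _ x ↦ |x|)
    (fun r hr c ↦ by rw [sum_abs_smul hr, mul_left_comm])
    (fun c d ↦ by rw [← mul_add]; exact mul_le_mul_of_nonneg_left (sum_abs_add_le c d) hs)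
    (fun c ↦ h c c.2)
  have hann : Finsupp.linearCombination ℝ ν - g ∈ relations.dualAnnihilator :=
    (Submodule.mem_dualAnnihilator _).2 fun c hc ↦ sub_eq_zero.2 (hg_eq ⟨c, hc⟩).symm
  rw [← LinearMap.range_dualMap_eq_dualAnnihilator_ker] at hann
  obtain ⟨ℓ, hℓ⟩ := hann
  refine ⟨ℓ, fun i ↦ ?_⟩
  have hg : ν i - ℓ (v i) = g (Finsupp.single i 1) := by
    have hi := LinearMap.congr_fun hℓ (Finsupp.single i 1)
    simp only [LinearMap.dualMap_apply, LinearMap.sub_apply,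
      Finsupp.linearCombination_single, one_smul] at hi
    rw [hi, _root_.sub_sub_cancel]
  have hpos : g (Finsupp.single i 1) ≤ s := by simpa using hg_le (Finsupp.single i 1)
  have hneg : -g (Finsupp.single i 1) ≤ s := by
    simpa [Finsupp.sum_neg_index] using hg_le (-Finsupp.single i 1)
  rw [hg]
  exact abs_le'.2 ⟨hpos, hneg⟩

lemma exists_linearMap_abs_sub_le_of_finset (hs : 0 ≤ s)
    (h : ∀ t : Finset I, ∃ ℓ : W →ₗ[ℝ] ℝ, ∀ i ∈ t, |ν i - ℓ (v i)| ≤ s) :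
    ∃ ℓ : W →ₗ[ℝ] ℝ, ∀ i, |ν i - ℓ (v i)| ≤ s := by
  refine exists_linearMap_abs_sub_le hs fun c hc ↦ ?_
  obtain ⟨ℓ, hℓ⟩ := h c.support
  calc Finsupp.linearCombination ℝ ν c
      = Finsupp.linearCombination ℝ ν c - ℓ (Finsupp.linearCombination ℝ v c) := by simp [hc]
    _ = ∑ i ∈ c.support, c i * (ν i - ℓ (v i)) := by
        simp [Finsupp.linearCombination_apply, Finsupp.sum, mul_sub]
    _ ≤ ∑ i ∈ c.support, s * |c i| := Finset.sum_le_sum fun i hi ↦ by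
        rw [mul_comm s]
        exact (le_abs_self _).trans
          (by rw [abs_mul]; exact mul_le_mul_of_nonneg_left (hℓ i hi) (abs_nonneg _))
    _ = s * c.sum fun _ x ↦ |x| := by rw [Finsupp.sum, Finset.mul_sum]

end Duality

section KaltonRoberts

open Filter

variable {Ω Ω' : Type*} {δ s : ℝ} {F : Set (Set Ω)} {ν : Set Ω → ℝ}

/-- The vector `(1, 1_A)`. The linear functionals on these vectors are the affine set functions,
that is, the sums of a constant and a measure. -/
noncomputable def affineVector (A : Set Ω) : ℝ × (Ω → ℝ) := (1, A.indicator 1)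

lemma affineVector_union_add_affineVector_empty {A B : Set Ω} (hAB : Disjoint A B) :
    affineVector (A ∪ B) + affineVector ∅ = affineVector A + affineVector B := by
  simp [affineVector, Set.indicator_union_of_disjoint hAB, Pi.add_def]

/-- On the family `F`, the set function `ν` is within `s` of an affine set function. -/
def NearAffineOn (F : Set (Set Ω)) (s : ℝ) (ν : Set Ω → ℝ) : Prop :=
  ∃ ℓ : ℝ × (Ω → ℝ) →ₗ[ℝ] ℝ, ∀ A ∈ F, |ν A - ℓ (affineVector A)| ≤ s

lemma NearAffineOn.mono {s' : ℝ} (h : NearAffineOn F s ν) (hs : s ≤ s') : NearAffineOn F s' ν :=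
  h.imp fun _ hℓ A hA ↦ (hℓ A hA).trans hs

lemma AlmostAffine.sub_linearMap_affineVector (hν : AlmostAffine δ ν)
    (ℓ : ℝ × (Ω → ℝ) →ₗ[ℝ] ℝ) : AlmostAffine δ fun A ↦ ν A - ℓ (affineVector A) := by
  intro A B hAB
  have hℓ := congrArg ℓ (affineVector_union_add_affineVector_empty hAB)
  rw [map_add, map_add] at hℓ
  convert hν A B hAB using 2
  linear_combination -hℓ

lemma AlmostAffine.nearAffineOn_univ_improve (hν : AlmostAffine δ ν)
    (h : NearAffineOn Set.univ s ν) : NearAffineOn Set.univ (31 / 32 * s + 7 / 4 * δ) ν := by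
  obtain ⟨ℓ, hℓ⟩ := h
  have hs : 0 ≤ s := (abs_nonneg _).trans (hℓ ∅ trivial)
  have hδ := hν.nonneg
  suffices hbound : ∀ c : Set Ω →₀ ℝ, Finsupp.linearCombination ℝ affineVector c = 0 →
      Finsupp.linearCombination ℝ ν c ≤ (31 / 32 * s + 7 / 4 * δ) * c.sum fun _ x ↦ |x| by
    obtain ⟨ℓ', hℓ'⟩ := exists_linearMap_abs_sub_le (by positivity) hbound
    exact ⟨ℓ', fun A _ ↦ hℓ' A⟩
  intro c hc
  have hsum : ∑ A ∈ c.support, c A = 0 := by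
    simpa [Finsupp.linearCombination_apply, Finsupp.sum, affineVector, Prod.fst_sum] using
      congrArg Prod.fst hc
  have hcover : ∑ A ∈ c.support, c A • A.indicator (1 : Ω → ℝ) = 0 := by
    simpa [Finsupp.linearCombination_apply, Finsupp.sum, affineVector, Prod.snd_sum] using
      congrArg Prod.snd hc
  calc Finsupp.linearCombination ℝ ν c
      = Finsupp.linearCombination ℝ ν c - ℓ (Finsupp.linearCombination ℝ affineVector c) := by
        simp [hc]
    _ = ∑ A ∈ c.support, c A * (ν A - ℓ (affineVector A)) := by
        simp [Finsupp.linearCombination_apply, Finsupp.sum, mul_sub]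
    _ ≤ (31 / 32 * s + 7 / 4 * δ) * c.sum fun _ x ↦ |x| :=
        (hν.sub_linearMap_affineVector ℓ).sum_mul_le_of_sum_eq_zero (fun A ↦ hℓ A trivial)
          hsum hcover

/-- `56 δ` is the fixed point of the improvement `s ↦ 31 / 32 * s + 7 / 4 * δ`. -/
lemma AlmostAffine.nearAffineOn_univ_of_abs_le (hν : AlmostAffine δ ν) {C : ℝ}
    (hC : ∀ A, |ν A| ≤ C) (hs : 56 * δ < s) : NearAffineOn Set.univ s ν := by
  have hiterate (n : ℕ) : NearAffineOn Set.univ (56 * δ + (31 / 32) ^ n * C) ν := by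
    induction n with
    | zero => exact ⟨0, fun A _ ↦ by simpa using (hC A).trans (by linarith [hν.nonneg])⟩
    | succ n ih => exact (hν.nearAffineOn_univ_improve ih).mono (le_of_eq (by ring))
  have hlim : Tendsto (fun n : ℕ ↦ 56 * δ + (31 / 32 : ℝ) ^ n * C) atTop
      (nhds (56 * δ + 0 * C)) :=
    .const_add _ <| .mul_const C <|
      _root_.tendsto_pow_atTop_nhds_zero_of_lt_one (by norm_num) (by norm_num)
  obtain ⟨n, hn⟩ := (hlim.eventually_lt_const (by simpa using hs)).exists
  exact (hiterate n).mono hn.le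

lemma NearAffineOn.exists_linearMap_preimage {π : Ω → Ω'} (hπ : Function.Surjective π)
    (h : NearAffineOn Set.univ s fun P ↦ ν (π ⁻¹' P)) :
    ∃ ℓ : ℝ × (Ω → ℝ) →ₗ[ℝ] ℝ, ∀ P, |ν (π ⁻¹' P) - ℓ (affineVector (π ⁻¹' P))| ≤ s := by
  obtain ⟨ℓ, hℓ⟩ := h
  obtain ⟨σ, hσ⟩ := hπ.hasRightInverse
  refine ⟨ℓ.comp (LinearMap.id.prodMap (LinearMap.funLeft ℝ ℝ σ)), fun P ↦ ?_⟩
  have hpull : LinearMap.funLeft ℝ ℝ σ ((π ⁻¹' P).indicator 1) = P.indicator 1 := by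
    have hσπ : σ ⁻¹' (π ⁻¹' P) = P := by
      rw [← Set.preimage_comp, hσ.comp_eq_id, Set.preimage_id]
    ext x
    rw [LinearMap.funLeft_apply, ← Set.indicator_comp_right, hσπ]
    rfl
  simpa [affineVector, hpull] using hℓ P trivial

lemma IsSetAlg.isSetAlgebra (hF : IsSetAlg F) : MeasureTheory.IsSetAlgebra F where
  empty_mem := hF.1
  compl_mem A hA := hF.2.1 A hA
  union_mem A B hA hB := hF.2.2 A hA B hB

/-- The quotient identifies points that belong to the same members of `t`. -/
lemma IsSetAlg.exists_finite_quotient.{u} {Ω : Type u} {F : Set (Set Ω)} (hF : IsSetAlg F)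
    (t : Finset F) : ∃ (Ω' : Type u) (_ : Finite Ω') (π : Ω → Ω'), Function.Surjective π ∧
      (∀ P, π ⁻¹' P ∈ F) ∧ ∀ A ∈ t, ∃ P, π ⁻¹' P = A := by
  classical
  let pattern : Ω → (t → Prop) := fun ω A ↦ ω ∈ (A : Set Ω)
  refine ⟨Set.range pattern, inferInstance, Set.rangeFactorization pattern,
    Set.rangeFactorization_surjective, fun P ↦ ?_, fun A hA ↦ ⟨{x | x.1 ⟨A, hA⟩}, rfl⟩⟩
  have hatom (x : Set.range pattern) : Set.rangeFactorization pattern ⁻¹' {x} ∈ F := by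
    have hinter : Set.rangeFactorization pattern ⁻¹' {x} =
        ⋂ A ∈ (Finset.univ : Finset t), if x.1 A then (A : Set Ω) else (A : Set Ω)ᶜ := by
      ext ω
      simp only [Set.mem_preimage, Set.mem_singleton_iff, Subtype.ext_iff, funext_iff,
        Finset.mem_univ, Set.iInter_true, Set.mem_iInter]
      refine forall_congr' fun A ↦ ?_
      by_cases hA : x.1 A <;> simp [hA, pattern, Set.rangeFactorization]
    rw [hinter]
    refine hF.isSetAlgebra.biInter_mem _ fun A _ ↦ ?_
    split_ifs
    exacts [A.1.2, hF.2.1 _ A.1.2]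
  have hunion : Set.rangeFactorization pattern ⁻¹' P =
      ⋃ x ∈ P.toFinite.toFinset, Set.rangeFactorization pattern ⁻¹' {x} := by
    ext
    simp
  rw [hunion]
  exact hF.isSetAlgebra.biUnion_mem _ fun x _ ↦ hatom x

lemma OneAdd.norm_empty_le {X : Type*} [SeminormedAddCommGroup X] {ν : Set Ω → X}
    (hF : IsSetAlg F) (hν : OneAdd F ν) : ‖ν ∅‖ ≤ 1 := by
  simpa using hν ∅ hF.1 ∅ hF.1 disjoint_bot_left

lemma OneAdd.almostAffine_preimage (hF : IsSetAlg F) (hν : OneAdd F ν) {π : Ω → Ω'}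
    (hπ : ∀ P, π ⁻¹' P ∈ F) : AlmostAffine 2 fun P ↦ ν (π ⁻¹' P) := by
  intro P Q hPQ
  have hadd := hν _ (hπ P) _ (hπ Q) (hPQ.preimage π)
  calc |ν (π ⁻¹' (P ∪ Q)) + ν (π ⁻¹' ∅) - ν (π ⁻¹' P) - ν (π ⁻¹' Q)|
      = ‖(ν (π ⁻¹' P ∪ π ⁻¹' Q) - ν (π ⁻¹' P) - ν (π ⁻¹' Q)) + ν ∅‖ := by
        rw [Set.preimage_union, Set.preimage_empty, Real.norm_eq_abs]
        congr 1
        ring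
    _ ≤ 1 + 1 := (norm_add_le _ _).trans (add_le_add hadd (hν.norm_empty_le hF))
    _ = 2 := by norm_num

theorem OneAdd.nearAffineOn (hF : IsSetAlg F) (hν : OneAdd F ν) : NearAffineOn F 113 ν := by
  suffices hfinite : ∀ t : Finset F, ∃ ℓ : ℝ × (Ω → ℝ) →ₗ[ℝ] ℝ,
      ∀ A ∈ t, |ν A - ℓ (affineVector (A : Set Ω))| ≤ 113 by
    obtain ⟨ℓ, hℓ⟩ := exists_linearMap_abs_sub_le_of_finset (v := fun A : F ↦ affineVector A.1)
      (ν := fun A : F ↦ ν A) (by norm_num) hfinite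
    exact ⟨ℓ, fun A hA ↦ hℓ ⟨A, hA⟩⟩
  intro t
  obtain ⟨Ω', _, π, hπ_surj, hπ_mem, hπ_t⟩ := hF.exists_finite_quotient t
  have halmost := hν.almostAffine_preimage hF hπ_mem
  obtain ⟨C, hC⟩ := Finite.exists_le fun P ↦ |ν (π ⁻¹' P)|
  obtain ⟨ℓ, hℓ⟩ := (halmost.nearAffineOn_univ_of_abs_le (s := 113) hC
    (by norm_num)).exists_linearMap_preimage hπ_surj
  refine ⟨ℓ, fun A hA ↦ ?_⟩
  obtain ⟨P, hP⟩ := hπ_t A hA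
  exact hP ▸ hℓ P

/-- The measure differs from the affine approximation by a constant, which is at most `113 + 1`
because `|ν ∅| ≤ 1`. -/
theorem kalton_roberts (hF : IsSetAlg F) (hν : OneAdd F ν) :
    ∃ μ : Set Ω → ℝ, VectMeas F μ ∧ ∀ A ∈ F, |ν A - μ A| ≤ 227 := by
  obtain ⟨ℓ, hℓ⟩ := hν.nearAffineOn hF
  refine ⟨fun A ↦ ℓ (affineVector A - affineVector ∅), fun A _ B _ hAB ↦ ?_, fun A hA ↦ ?_⟩
  · dsimp only
    rw [← map_add, eq_sub_of_add_eq (affineVector_union_add_affineVector_empty hAB)]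
    congr 1
    abel
  · have hempty : |ν ∅| ≤ 1 := hν.norm_empty_le hF
    have hA := abs_le.1 (hℓ A hA)
    have hA_empty := abs_le.1 (hℓ ∅ hF.1)
    simp only [map_sub, abs_le] at hempty ⊢
    constructor <;> linarith

end KaltonRoberts

section InjectiveSpaces

lemma hasSVMBound_real : HasSVMBound ℝ 227 := fun _ _ hF _ hν ↦ kalton_roberts hF hν

lemma hasSVMBound_lp_infty {ι : Type*} {E : ι → Type*} [∀ i, NormedAddCommGroup (E i)] {v : ℝ}
    (hv : 0 ≤ v) (hE : ∀ i, HasSVMBound (E i) v) : HasSVMBound (lp E ∞) v := by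
  intro Ω F hF ν hν
  have hcoord (i : ι) : OneAdd F fun A ↦ ν A i := fun A hA B hB hAB ↦
    (lp.norm_apply_le_norm ENNReal.top_ne_zero (ν (A ∪ B) - ν A - ν B) i).trans (hν A hA B hB hAB)
  choose μ hμ_add hμ_near using fun i ↦ hE i Ω F hF _ (hcoord i)
  have hμ_mem (A : Set Ω) (hA : A ∈ F) : Memℓp (fun i ↦ μ i A) ∞ := by
    have hdiff : Memℓp (fun i ↦ ν A i - μ i A) ∞ :=
      memℓp_infty ⟨v, Set.forall_mem_range.2 fun i ↦ hμ_near i A hA⟩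
    convert (lp.memℓp (ν A)).sub hdiff using 1
    ext i
    simp
  classical
  refine ⟨fun A ↦ if hA : A ∈ F then ⟨fun i ↦ μ i A, hμ_mem A hA⟩ else 0,
    fun A hA B hB hAB ↦ ?_, fun A hA ↦ ?_⟩
  · simp only [hA, hB, hF.2.2 A hA B hB, dite_true]
    ext i
    exact hμ_add i A hA B hB hAB
  · simp only [hA, dite_true]
    exact lp.norm_le_of_forall_le hv fun i ↦ hμ_near i A hA

variable {X E : Type*} [NormedAddCommGroup X] [NormedSpace ℝ X] [NormedAddCommGroup E]
  [NormedSpace ℝ E]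

lemma HasSVMBound.of_retract {v : ℝ} (hE : HasSVMBound E v) (J : X →ₗᵢ[ℝ] E) (P : E →L[ℝ] X)
    (hPJ : ∀ x, P (J x) = x) : HasSVMBound X (‖P‖ * v) := by
  intro Ω F hF ν hν
  obtain ⟨μ, hμ_add, hμ_near⟩ := hE Ω F hF (J ∘ ν) fun A hA B hB hAB ↦ by
    simpa only [Function.comp_apply, ← map_sub, J.norm_map] using hν A hA B hB hAB
  refine ⟨P ∘ μ, fun A hA B hB hAB ↦ ?_, fun A hA ↦ ?_⟩
  · simp only [Function.comp_apply, hμ_add A hA B hB hAB, map_add]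
  · calc ‖ν A - P (μ A)‖ = ‖P (J (ν A) - μ A)‖ := by rw [map_sub, hPJ]
      _ ≤ ‖P‖ * v := P.le_opNorm_of_le (hμ_near A hA)

/-- The canonical isometric embedding of a normed space into the bounded functions on its dual unit
ball. -/
noncomputable def dualBallEmbedding (X : Type*) [NormedAddCommGroup X] [NormedSpace ℝ X] :
    X →ₗᵢ[ℝ] lp (fun _ : Metric.closedBall (0 : StrongDual ℝ X) 1 ↦ ℝ) ∞ :=
  have hball (g : Metric.closedBall (0 : StrongDual ℝ X) 1) (x : X) : ‖g.1 x‖ ≤ ‖x‖ := by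
    simpa using g.1.le_of_opNorm_le (mem_closedBall_zero_iff.1 g.2) x
  { toFun x := ⟨fun g ↦ g.1 x, memℓp_infty ⟨‖x‖, Set.forall_mem_range.2 fun g ↦ hball g x⟩⟩
    map_add' x y := by
      ext g
      exact map_add g.1 x y
    map_smul' r x := by
      ext g
      exact map_smul g.1 r x
    norm_map' x := by
      refine le_antisymm (lp.norm_le_of_forall_le (norm_nonneg x) fun g ↦ hball g x) ?_
      obtain ⟨g, hg, hgx⟩ := exists_dual_vector'' ℝ x
      calc ‖x‖ = ‖g x‖ := by rw [hgx]; simp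
        _ ≤ _ := lp.norm_apply_le_norm ENNReal.top_ne_zero
          (⟨fun g ↦ g.1 x, memℓp_infty ⟨‖x‖, Set.forall_mem_range.2 fun g ↦ hball g x⟩⟩ :
            lp (fun _ : Metric.closedBall (0 : StrongDual ℝ X) 1 ↦ ℝ) ∞)
          ⟨g, mem_closedBall_zero_iff.2 hg⟩ }

lemma IsInjectiveBanach.exists_retraction {X : Type*} [NormedAddCommGroup X] [NormedSpace ℝ X]
    [CompleteSpace X] (hX : IsInjectiveBanach X) {E : Type} [NormedAddCommGroup E]
    [NormedSpace ℝ E] [CompleteSpace E] (J : X →ₗᵢ[ℝ] E) :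
    ∃ P : E →L[ℝ] X, ∀ x, P (J x) = x := by
  have hclosed : IsClosed (LinearMap.range J.toLinearMap : Set E) := by
    rw [LinearMap.coe_range]
    exact J.isometry.isClosedEmbedding.isClosed_range
  obtain ⟨P, hP⟩ := hX E _ hclosed (J.equivRange.symm : _ →L[ℝ] X)
  exact ⟨P, fun x ↦ by simpa using hP (J.equivRange x)⟩

end InjectiveSpaces

/-- every injective Banach space has the SVM property. -/
theorem stmt_4 (X : Type) [NormedAddCommGroup X] [NormedSpace ℝ X] [CompleteSpace X]
    (hX : IsInjectiveBanach X) :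
    ∃ v : ℝ, HasSVMBound X v := by
  obtain ⟨P, hP⟩ := hX.exists_retraction (dualBallEmbedding X)
  have hlp : HasSVMBound (lp (fun _ : Metric.closedBall (0 : StrongDual ℝ X) 1 ↦ ℝ) ∞) 227 :=
    hasSVMBound_lp_infty (by norm_num) fun _ ↦ hasSVMBound_real
  exact ⟨‖P‖ * 227, hlp.of_retract (dualBallEmbedding X) P hP⟩
end

section
/- Let K be a Kalton–Roberts constant and let X be an L∞,c-space. Then X has the ω-SVM property with constant v for every v > cK: for every v > cK, every finite set algebra F and every 1-additive ν : F → X, there is a vector measure μ : F → X with ‖ν(A) − μ(A)‖ ≤ v for all A ∈ F. -/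
open Cardinal ENNReal

/--  is an L∞,c-space. -/
def IsLinftyC (Y : Type*) [NormedAddCommGroup Y] [NormedSpace ℝ Y] (c : ℝ) : Prop :=
  ∀ E : Submodule ℝ Y, FiniteDimensional ℝ E →
    ∃ F : Submodule ℝ Y, E ≤ F ∧ FiniteDimensional ℝ F ∧
      ∃ (m : ℕ) (T : F ≃L[ℝ] PiLp ⊤ (fun _ : Fin m => ℝ)),
        Module.finrank ℝ F = m ∧
        ‖(T : ↥F →L[ℝ] PiLp ⊤ (fun _ : Fin m => ℝ))‖ *
          ‖(T.symm : PiLp ⊤ (fun _ : Fin m => ℝ) →L[ℝ] ↥F)‖ ≤ c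

/-!
A 1-additive map on a finite algebra has finitely many values, hence takes values in a
finite-dimensional subspace `G` with an isomorphism `T : G ≃ ℓ∞^m`, `‖T‖ * ‖T⁻¹‖ ≤ c`. The
coordinates of `T ∘ ν` are real functions that are additive up to `‖T‖`, so Kalton–Roberts gives
additive functions at distance at most `‖T‖ * K` from them. In the max norm, these assemble to a
vector measure at distance at most `‖T‖ * K` from `T ∘ ν`, and applying `T⁻¹` costs a factor
`‖T⁻¹‖`.
-/

/-- `ν` is `δ`-additive on `F`; 1-additivity (`OneAdd`) is the case `δ = 1`. -/
def DeltaAdd {Ω X : Type*} [SeminormedAddCommGroup X] (F : Set (Set Ω)) (δ : ℝ)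
    (ν : Set Ω → X) : Prop :=
  ∀ A ∈ F, ∀ B ∈ F, Disjoint A B → ‖ν (A ∪ B) - ν A - ν B‖ ≤ δ

/-- The SVM property of `X` with constant `v` for the single family `F`: the notions `IsKRConst`,
`HasSVMBound` and `HasOmegaSVMBound` ask for it for all `F` of some class. Fixing `F` lets the
property be transferred between different spaces `X`. -/
def HasSVMBoundOn {Ω : Type*} (F : Set (Set Ω)) (X : Type*) [SeminormedAddCommGroup X]
    (v : ℝ) : Prop :=
  ∀ ν : Set Ω → X, OneAdd F ν → ∃ μ : Set Ω → X, VectMeas F μ ∧ ∀ A ∈ F, ‖ν A - μ A‖ ≤ v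

section

variable {Ω : Type*} {F : Set (Set Ω)} {δ v : ℝ}

theorem VectMeas.map {X Y : Type*} [AddCommGroup X] [AddCommGroup Y] {μ : Set Ω → X}
    (hμ : VectMeas F μ) (f : X →+ Y) : VectMeas F fun A => f (μ A) := by
  intro A hA B hB hAB
  simp only [hμ A hA B hB hAB, map_add]

theorem DeltaAdd.vectMeas {X : Type*} [NormedAddCommGroup X] {ν : Set Ω → X}
    (hν : DeltaAdd F 0 ν) : VectMeas F ν := by
  intro A hA B hB hAB
  have hdefect : ν (A ∪ B) - ν A - ν B = 0 := norm_le_zero_iff.1 (hν A hA B hB hAB)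
  rwa [sub_sub, sub_eq_zero] at hdefect

theorem DeltaAdd.const_smul {X : Type*} [SeminormedAddCommGroup X] [NormedSpace ℝ X]
    {ν : Set Ω → X} (hν : DeltaAdd F δ ν) (a : ℝ) : DeltaAdd F (‖a‖ * δ) fun A => a • ν A := by
  intro A hA B hB hAB
  rw [← smul_sub, ← smul_sub, norm_smul]
  exact mul_le_mul_of_nonneg_left (hν A hA B hB hAB) (norm_nonneg a)

theorem OneAdd.map {X Y : Type*} [SeminormedAddCommGroup X] [NormedSpace ℝ X]
    [SeminormedAddCommGroup Y] [NormedSpace ℝ Y] {ν : Set Ω → X} (hν : OneAdd F ν)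
    (T : X →L[ℝ] Y) : DeltaAdd F ‖T‖ fun A => T (ν A) := by
  intro A hA B hB hAB
  rw [← map_sub, ← map_sub]
  exact T.unit_le_opNorm _ (hν A hA B hB hAB)

namespace HasSVMBoundOn

theorem mono {X : Type*} [SeminormedAddCommGroup X] {w : ℝ} (h : HasSVMBoundOn F X v)
    (hvw : v ≤ w) : HasSVMBoundOn F X w := by
  intro ν hν
  obtain ⟨μ, hμ, hμv⟩ := h ν hν
  exact ⟨μ, hμ, fun A hA => (hμv A hA).trans hvw⟩

theorem nonneg {X : Type*} [SeminormedAddCommGroup X] (h : HasSVMBoundOn F X v)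
    (hF : F.Nonempty) : 0 ≤ v := by
  obtain ⟨A, hA⟩ := hF
  obtain ⟨μ, -, hμ⟩ := h (fun _ => 0) fun _ _ _ _ _ => by simp
  exact (norm_nonneg _).trans (hμ A hA)

theorem exists_vectMeas_of_deltaAdd {X : Type*} [NormedAddCommGroup X] [NormedSpace ℝ X]
    (h : HasSVMBoundOn F X v) (hδ : 0 ≤ δ) {ν : Set Ω → X} (hν : DeltaAdd F δ ν) :
    ∃ μ : Set Ω → X, VectMeas F μ ∧ ∀ A ∈ F, ‖ν A - μ A‖ ≤ δ * v := by
  obtain rfl | hδ := hδ.eq_or_lt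
  · exact ⟨ν, hν.vectMeas, fun A _ => by simp⟩
  have hδν : OneAdd F fun A => δ⁻¹ • ν A := by
    have hδ_norm : ‖δ⁻¹‖ * δ = 1 := by
      rw [Real.norm_of_nonneg (inv_nonneg.2 hδ.le), inv_mul_cancel₀ hδ.ne']
    have hsmul := hν.const_smul δ⁻¹
    rwa [hδ_norm] at hsmul
  obtain ⟨μ, hμ, hμv⟩ := h _ hδν
  refine ⟨fun A => δ • μ A, hμ.map (DistribSMul.toAddMonoidHom X δ), fun A hA => ?_⟩
  calc ‖ν A - δ • μ A‖ = ‖δ • (δ⁻¹ • ν A - μ A)‖ := by rw [smul_sub, smul_inv_smul₀ hδ.ne']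
    _ = δ * ‖δ⁻¹ • ν A - μ A‖ := norm_smul_of_nonneg hδ.le _
    _ ≤ δ * v := mul_le_mul_of_nonneg_left (hμv A hA) hδ.le

theorem piLp_top {ι : Type*} [Fintype ι] {X : ι → Type*} [∀ i, SeminormedAddCommGroup (X i)]
    (h : ∀ i, HasSVMBoundOn F (X i) v) (hv : 0 ≤ v) : HasSVMBoundOn F (PiLp ∞ X) v := by
  intro ν hν
  have hν_apply : ∀ i, OneAdd F fun A => ν A i := fun i A hA B hB hAB =>
    (PiLp.norm_apply_le (ν (A ∪ B) - ν A - ν B) i).trans (hν A hA B hB hAB)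
  choose μ hμ hμv using fun i => h i _ (hν_apply i)
  refine ⟨fun A => WithLp.toLp ∞ fun i => μ i A, fun A hA B hB hAB => ?_, fun A hA => ?_⟩
  · ext i
    exact hμ i A hA B hB hAB
  · rw [← PiLp.norm_ofLp, pi_norm_le_iff_of_nonneg hv]
    exact fun i => hμv i A hA

theorem of_leftInverse {X Y : Type*} [SeminormedAddCommGroup X] [NormedSpace ℝ X]
    [NormedAddCommGroup Y] [NormedSpace ℝ Y] (h : HasSVMBoundOn F Y v) (S : X →L[ℝ] Y)
    (R : Y →L[ℝ] X) (hRS : Function.LeftInverse R S) :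
    HasSVMBoundOn F X (‖S‖ * ‖R‖ * v) := by
  intro ν hν
  obtain ⟨μ, hμ, hμv⟩ := h.exists_vectMeas_of_deltaAdd (norm_nonneg S) (hν.map S)
  refine ⟨fun A => R (μ A), hμ.map (R : Y →+ X), fun A hA => ?_⟩
  calc ‖ν A - R (μ A)‖ = ‖R (S (ν A) - μ A)‖ := by rw [map_sub, hRS]
    _ ≤ ‖R‖ * (‖S‖ * v) := R.le_opNorm_of_le (hμv A hA)
    _ = ‖S‖ * ‖R‖ * v := by ring

theorem exists_vectMeas_of_mem_range {R X Y : Type*} [Ring R] [SeminormedAddCommGroup X]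
    [Module R X] [SeminormedAddCommGroup Y] [Module R Y] (h : HasSVMBoundOn F Y v)
    (hF : IsSetAlg F) (f : Y →ₗᵢ[R] X) {ν : Set Ω → X} (hν : OneAdd F ν)
    (hνf : ∀ A ∈ F, ν A ∈ Set.range f) :
    ∃ μ : Set Ω → X, VectMeas F μ ∧ ∀ A ∈ F, ‖ν A - μ A‖ ≤ v := by
  choose! ν' hν' using hνf
  have hν'_oneAdd : OneAdd F ν' := by
    intro A hA B hB hAB
    rw [← f.norm_map, map_sub, map_sub, hν' _ (hF.2.2 A hA B hB), hν' A hA, hν' B hB]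
    exact hν A hA B hB hAB
  obtain ⟨μ, hμ, hμv⟩ := h ν' hν'_oneAdd
  refine ⟨fun A => f (μ A), hμ.map (f : Y →+ X), fun A hA => ?_⟩
  rw [← hν' A hA, ← map_sub, f.norm_map]
  exact hμv A hA

theorem of_forall_finiteDimensional {𝕜 X : Type*} [DivisionRing 𝕜] [SeminormedAddCommGroup X]
    [Module 𝕜 X] (hF : IsSetAlg F) (hfin : F.Finite)
    (h : ∀ E : Submodule 𝕜 X, FiniteDimensional 𝕜 E →
      ∃ G : Submodule 𝕜 X, E ≤ G ∧ HasSVMBoundOn F G v) :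
    HasSVMBoundOn F X v := by
  intro ν hν
  obtain ⟨G, hspan, hG⟩ := h _ (FiniteDimensional.span_of_finite 𝕜 (hfin.image ν))
  have hmem : ∀ A ∈ F, ν A ∈ G := fun A hA =>
    hspan (Submodule.subset_span (Set.mem_image_of_mem ν hA))
  exact hG.exists_vectMeas_of_mem_range hF G.subtypeₗᵢ hν fun A hA => ⟨⟨ν A, hmem A hA⟩, rfl⟩

end HasSVMBoundOn

end

theorem stmt_5_general {K c : ℝ} (hK : IsKRConst K) {X : Type*} [NormedAddCommGroup X]
    [NormedSpace ℝ X] (hX : IsLinftyC X c) : HasOmegaSVMBound X (c * K) := by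
  intro Ω F hF hfin
  have hℝ : HasSVMBoundOn F ℝ K := hK Ω F hF
  have hK_nonneg : 0 ≤ K := hℝ.nonneg ⟨∅, hF.1⟩
  refine HasSVMBoundOn.of_forall_finiteDimensional (𝕜 := ℝ) hF hfin fun E hE => ?_
  obtain ⟨G, hEG, -, m, T, -, hT⟩ := hX E hE
  have hℓ : HasSVMBoundOn F (PiLp ∞ fun _ : Fin m => ℝ) K := .piLp_top (fun _ => hℝ) hK_nonneg
  have hG : HasSVMBoundOn F G (‖T.toContinuousLinearMap‖ * ‖T.symm.toContinuousLinearMap‖ * K) :=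
    hℓ.of_leftInverse _ _ T.symm_apply_apply
  exact ⟨G, hEG, hG.mono (mul_le_mul_of_nonneg_right hT hK_nonneg)⟩

/-- every L∞,c-space has the ω-SVM property with any constant
v > c·K, where K is a Kalton–Roberts constant. -/
theorem stmt_5 (K : ℝ) (hK : IsKRConst K)
    (X : Type) [NormedAddCommGroup X] [NormedSpace ℝ X] [CompleteSpace X]
    (c : ℝ) (hc : 1 ≤ c) (hX : IsLinftyC X c)
    (v : ℝ) (hv : c * K < v) :
    HasOmegaSVMBound X v :=
  fun Ω F hF hfin => HasSVMBoundOn.mono (stmt_5_general hK hX Ω F hF hfin) hv.le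
end

section
/- Let Γ be a set and let X be a Banach space having the (2^|Γ|)⁺-SVM property with constant w, i.e. the approximation property of 1-additive maps holds (with bound w) for every set algebra of cardinality at most 2^|Γ|. Let Y₀ be the linear subspace of ℓ∞(Γ) consisting of all step functions, i.e. finite linear combinations of indicator functions 1_A with A ⊆ Γ. Then for every quasi-linear map f : Y₀ → X with constant δ and every v > w there exists a linear map h : Y₀ → X such that ‖f(t) − h(t)‖ ≤ 4δ(2 + v)‖t‖ for all t ∈ Y₀. In particular, the pair (ℓ∞(Γ), X) splits. -/
/-!
After division by `2δ`, the set function `A ↦ f 1_A` is 1-additive on the algebra of all subsets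
of `Γ`, so some vector measure `μ` satisfies `‖f 1_A - 2δ μ(A)‖ ≤ b := 2δw`. Integration against
`2δ μ` is a linear map `h` on step functions, and `g = f - h` is quasi-linear with constant `δ` and
bounded by `b` on indicator functions.

Such a `g` is bounded on the unit ball. If `0 ≤ t ≤ 1`, then `2t = 1_{t ≥ 1/2} + t'` where again
`0 ≤ t' ≤ 1`, hence `2‖g t‖ ≤ (2δ + b) + ‖g t'‖`. All iterates of `t ↦ t'` are functions of the
finitely valued `t`, so they stay in a finite-dimensional space, on which `g` is bounded;
comparing suprema gives `‖g t‖ ≤ 2δ + b`. Splitting an arbitrary `t` in the unit ball into positive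
and negative parts yields `‖g t‖ ≤ 2(2δ + b) + 2δ = 2δ(3 + 2w)`.
-/

open Cardinal ENNReal

/-- The subspace of step functions in l_infinity(Gamma): the span of indicator functions. -/
noncomputable def stepFunctions (Γ : Type) : Submodule ℝ ↥(lp (fun _ : Γ => ℝ) ⊤) :=
  Submodule.span ℝ {x | ∃ A : Set Γ, ∀ γ : Γ, x γ = Set.indicator A (fun _ => (1 : ℝ)) γ}

lemma le_of_forall_exists_two_mul_le_add {α : Type*} {S : Set α} {N : α → ℝ} {C K : ℝ}
    (hC : ∀ x ∈ S, N x ≤ C) (hN : ∀ x ∈ S, ∃ y ∈ S, 2 * N x ≤ K + N y) :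
    ∀ x ∈ S, N x ≤ K := by
  intro x hx
  have bddAbove : BddAbove (N '' S) := ⟨C, Set.forall_mem_image.2 hC⟩
  have le_sSup : ∀ y ∈ S, N y ≤ sSup (N '' S) := fun y hy =>
    le_csSup bddAbove (Set.mem_image_of_mem N hy)
  have sSup_le : sSup (N '' S) ≤ (K + sSup (N '' S)) / 2 := by
    refine csSup_le ⟨N x, Set.mem_image_of_mem N hx⟩ (Set.forall_mem_image.2 fun y hy => ?_)
    obtain ⟨z, hz, hyz⟩ := hN y hy
    linarith [le_sSup z hz]
  linarith [le_sSup x hx]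

lemma norm_smul_le_of_abs_le_one {E : Type*} [SeminormedAddCommGroup E] [NormedSpace ℝ E] {a : ℝ}
    (ha : |a| ≤ 1) (y : E) : ‖a • y‖ ≤ ‖y‖ := by
  rw [norm_smul]
  exact mul_le_of_le_one_left (norm_nonneg y) ha

/-- A quasi-linear map `f` with constant `δ`: homogeneous, and additive up to an error controlled
by the norms of the summands. No sign of `δ` is imposed. -/
structure IsQuasiLinear {V X : Type*} [SeminormedAddCommGroup V] [NormedSpace ℝ V]
    [SeminormedAddCommGroup X] [NormedSpace ℝ X] (f : V → X) (δ : ℝ) : Prop where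
  map_smul : ∀ (a : ℝ) (x : V), f (a • x) = a • f x
  norm_map_add_sub_sub_le : ∀ x y : V, ‖f (x + y) - f x - f y‖ ≤ δ * (‖x‖ + ‖y‖)

namespace IsQuasiLinear

section Seminormed

variable {V X : Type*} [SeminormedAddCommGroup V] [NormedSpace ℝ V]
  [SeminormedAddCommGroup X] [NormedSpace ℝ X] {f : V → X} {δ : ℝ}

protected lemma map_zero (hf : IsQuasiLinear f δ) : f 0 = 0 := by
  simpa using hf.map_smul 0 0

lemma mul_norm_nonneg (hf : IsQuasiLinear f δ) (x : V) : 0 ≤ δ * ‖x‖ := by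
  simpa using (norm_nonneg _).trans (hf.norm_map_add_sub_sub_le x 0)

lemma norm_map_add_le (hf : IsQuasiLinear f δ) (x y : V) :
    ‖f (x + y)‖ ≤ ‖f x‖ + ‖f y‖ + δ * (‖x‖ + ‖y‖) := by
  calc ‖f (x + y)‖ = ‖f x + f y + (f (x + y) - f x - f y)‖ := by congr 1; abel
    _ ≤ ‖f x‖ + ‖f y‖ + ‖f (x + y) - f x - f y‖ := norm_add₃_le
    _ ≤ ‖f x‖ + ‖f y‖ + δ * (‖x‖ + ‖y‖) := by gcongr; exact hf.norm_map_add_sub_sub_le x y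

lemma sub_linearMap (hf : IsQuasiLinear f δ) (h : V →ₗ[ℝ] X) :
    IsQuasiLinear (fun x => f x - h x) δ where
  map_smul a x := by rw [hf.map_smul, h.map_smul, smul_sub]
  norm_map_add_sub_sub_le x y := by
    convert hf.norm_map_add_sub_sub_le x y using 2
    rw [h.map_add]
    abel

lemma exists_norm_map_sum_smul_le (hf : IsQuasiLinear f δ) {ι : Type*} (s : Finset ι)
    (x : ι → V) :
    ∃ C, ∀ a : ι → ℝ, (∀ i ∈ s, |a i| ≤ 1) → ‖f (∑ i ∈ s, a i • x i)‖ ≤ C := by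
  classical
  induction s using Finset.induction_on with
  | empty => exact ⟨0, fun a _ => by simp [hf.map_zero]⟩
  | insert j s hj ih =>
    obtain ⟨C, hC⟩ := ih
    refine ⟨‖f (x j)‖ + C + |δ| * (‖x j‖ + ∑ i ∈ s, ‖x i‖), fun a ha => ?_⟩
    have norm_sum_le : ‖∑ i ∈ s, a i • x i‖ ≤ ∑ i ∈ s, ‖x i‖ := norm_sum_le_of_le s fun i hi =>
      norm_smul_le_of_abs_le_one (ha i (Finset.mem_insert_of_mem hi)) (x i)
    have abs_le_one : |a j| ≤ 1 := ha j (Finset.mem_insert_self j s)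
    rw [Finset.sum_insert hj]
    calc ‖f (a j • x j + ∑ i ∈ s, a i • x i)‖
        ≤ ‖f (a j • x j)‖ + ‖f (∑ i ∈ s, a i • x i)‖
          + δ * (‖a j • x j‖ + ‖∑ i ∈ s, a i • x i‖) := hf.norm_map_add_le _ _
      _ ≤ ‖f (x j)‖ + C + |δ| * (‖x j‖ + ∑ i ∈ s, ‖x i‖) := by
        rw [hf.map_smul]
        gcongr
        exacts [norm_smul_le_of_abs_le_one abs_le_one _,
          hC a fun i hi => ha i (Finset.mem_insert_of_mem hi), le_abs_self δ,
          norm_smul_le_of_abs_le_one abs_le_one _]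

lemma norm_map_le_of_forall_norm_le_one (hf : IsQuasiLinear f δ) {C : ℝ}
    (hC : ∀ x, ‖x‖ ≤ 1 → ‖f x‖ ≤ C) (x : V) : ‖f x‖ ≤ C * ‖x‖ := by
  refine le_mul_of_forall_lt₀ fun C' hC' r hr => ?_
  have r_pos : 0 < r := (norm_nonneg x).trans_lt hr
  have norm_le_one : ‖r⁻¹ • x‖ ≤ 1 := by
    rw [norm_smul, norm_inv, Real.norm_of_nonneg r_pos.le, inv_mul_le_one₀ r_pos]
    exact hr.le
  have le_C := (hC _ norm_le_one).trans hC'.le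
  rw [hf.map_smul, norm_smul, norm_inv, Real.norm_of_nonneg r_pos.le,
    inv_mul_le_iff₀ r_pos] at le_C
  exact le_C.trans_eq (mul_comm r C')

end Seminormed

lemma exists_linearMap_eq_of_nonpos {V X : Type*} [SeminormedAddCommGroup V] [NormedSpace ℝ V]
    [NormedAddCommGroup X] [NormedSpace ℝ X] {f : V → X} {δ : ℝ} (hf : IsQuasiLinear f δ)
    (hδ : δ ≤ 0) : ∃ h : V →ₗ[ℝ] X, ∀ x, h x = f x := by
  have map_add (x y : V) : f (x + y) = f x + f y := by
    rw [← sub_eq_zero, ← sub_sub, ← norm_le_zero_iff]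
    exact (hf.norm_map_add_sub_sub_le x y).trans
      (mul_nonpos_of_nonpos_of_nonneg hδ (by positivity))
  exact ⟨⟨⟨f, map_add⟩, hf.map_smul⟩, fun _ => rfl⟩

end IsQuasiLinear

section StepFunctions

variable {Γ : Type}

lemma stepFunctions_ext {s t : stepFunctions Γ} (h : ∀ γ, s.1 γ = t.1 γ) : s = t :=
  Subtype.ext (lp.ext (funext h))

lemma norm_stepFunctions_le {t : stepFunctions Γ} {C : ℝ} (hC : 0 ≤ C)
    (h : ∀ γ, |t.1 γ| ≤ C) : ‖t‖ ≤ C :=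
  lp.norm_le_of_forall_le (f := t.1) hC h

lemma abs_stepFunctions_apply_le (t : stepFunctions Γ) (γ : Γ) : |t.1 γ| ≤ ‖t‖ :=
  lp.norm_apply_le_norm ENNReal.top_ne_zero t.1 γ

lemma finite_range_stepFunctions (t : stepFunctions Γ) : (Set.range (t.1 : Γ → ℝ)).Finite := by
  obtain ⟨x, hx⟩ := t
  induction hx using Submodule.span_induction with
  | mem x hx =>
    obtain ⟨A, hA⟩ := hx
    rw [show (x : Γ → ℝ) = A.indicator fun _ => 1 from funext hA]
    exact (Set.toFinite {0, 1}).subset (Set.range_subset_iff.2 fun γ => by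
      by_cases h : γ ∈ A <;> simp [h])
  | zero => exact (Set.finite_singleton 0).subset (Set.range_subset_iff.2 fun γ => rfl)
  | add x y _ _ hx hy =>
    exact (hx.add hy).subset (Set.range_subset_iff.2 fun γ =>
      Set.add_mem_add (Set.mem_range_self γ) (Set.mem_range_self γ))
  | smul a x _ hx =>
    exact (Set.Finite.smul_set (a := a) hx).subset (Set.range_subset_iff.2 fun γ =>
      Set.smul_mem_smul_set (Set.mem_range_self γ))

/-- The indicator function `1_A` as an element of the space of step functions. -/
noncomputable def indicatorStep (A : Set Γ) : stepFunctions Γ :=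
  ⟨⟨A.indicator fun _ => 1, memℓp_infty ⟨1, Set.forall_mem_range.2 fun γ => by
    by_cases h : γ ∈ A <;> simp [h]⟩⟩, Submodule.subset_span ⟨A, fun _ => rfl⟩⟩

lemma indicatorStep_apply (A : Set Γ) (γ : Γ) :
    (indicatorStep A).1 γ = A.indicator (fun _ => 1) γ := rfl

lemma norm_indicatorStep_le_one (A : Set Γ) : ‖indicatorStep A‖ ≤ 1 :=
  norm_stepFunctions_le zero_le_one fun γ => by
    by_cases h : γ ∈ A <;> simp [indicatorStep_apply, h]

lemma indicatorStep_union {A B : Set Γ} (hAB : Disjoint A B) :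
    indicatorStep (A ∪ B) = indicatorStep A + indicatorStep B :=
  stepFunctions_ext fun γ =>
    congrFun (Set.indicator_union_of_disjoint hAB fun _ => (1 : ℝ)) γ

/-- The composition `φ ∘ t`, written as a linear combination of the indicator functions of the
level sets of `t`; these do not depend on `φ`. -/
noncomputable def stepComp (φ : ℝ → ℝ) (t : stepFunctions Γ) : stepFunctions Γ :=
  ∑ c ∈ (finite_range_stepFunctions t).toFinset, φ c • indicatorStep ((t.1 : Γ → ℝ) ⁻¹' {c})

lemma stepComp_apply (φ : ℝ → ℝ) (t : stepFunctions Γ) (γ : Γ) :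
    (stepComp φ t).1 γ = φ (t.1 γ) := by
  classical
  calc (stepComp φ t).1 γ
      = ∑ c ∈ (finite_range_stepFunctions t).toFinset,
          φ c * (indicatorStep ((t.1 : Γ → ℝ) ⁻¹' {c})).1 γ := by
        rw [stepComp, Submodule.coe_sum, lp.coeFn_sum]
        exact Finset.sum_apply γ _ _
    _ = ∑ c ∈ (finite_range_stepFunctions t).toFinset, if t.1 γ = c then φ c else 0 := by
        simp [indicatorStep_apply, Set.indicator_apply]
    _ = φ (t.1 γ) := by
        rw [Finset.sum_ite_eq, if_pos]
        exact (finite_range_stepFunctions t).mem_toFinset.2 (Set.mem_range_self γ)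

/-- The map removing the leading digit of a binary expansion in `[0, 1]`; the expansion
`0.111…` is chosen for `1`, which is therefore a fixed point. -/
noncomputable def binaryShift (x : ℝ) : ℝ :=
  2 * x - (Set.Ici (1 / 2)).indicator (fun _ => 1) x

lemma binaryShift_mem_Icc {x : ℝ} (hx : x ∈ Set.Icc 0 1) : binaryShift x ∈ Set.Icc 0 1 := by
  obtain ⟨h0, h1⟩ := hx
  simp only [binaryShift, Set.indicator_apply, Set.mem_Ici]
  split_ifs <;> constructor <;> linarith

lemma two_smul_stepComp (φ : ℝ → ℝ) (t : stepFunctions Γ) :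
    (2 : ℝ) • stepComp φ t =
      indicatorStep {γ | 1 / 2 ≤ φ (t.1 γ)} + stepComp (binaryShift ∘ φ) t := by
  refine stepFunctions_ext fun γ => ?_
  change 2 * (stepComp φ t).1 γ = (indicatorStep _).1 γ + (stepComp _ t).1 γ
  simp [stepComp_apply, indicatorStep_apply, binaryShift, Set.indicator_apply]

lemma norm_stepFunctions_le_one_of_mem_Icc {t : stepFunctions Γ}
    (ht : ∀ γ, t.1 γ ∈ Set.Icc 0 1) : ‖t‖ ≤ 1 :=
  norm_stepFunctions_le zero_le_one fun γ => (abs_of_nonneg (ht γ).1).trans_le (ht γ).2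

lemma stepComp_posPart_add_neg_stepComp_negPart (t : stepFunctions Γ) :
    stepComp (·⁺) t + (-1 : ℝ) • stepComp (·⁻) t = t := by
  refine stepFunctions_ext fun γ => ?_
  change (stepComp _ t).1 γ + -1 * (stepComp _ t).1 γ = t.1 γ
  rw [stepComp_apply, stepComp_apply, neg_one_mul, ← sub_eq_add_neg, posPart_sub_negPart]

end StepFunctions

section BoundedOnIndicators

variable {Γ : Type} {X : Type*} [SeminormedAddCommGroup X] [NormedSpace ℝ X]
  {g : stepFunctions Γ → X} {δ b : ℝ}

lemma IsQuasiLinear.two_mul_norm_map_stepComp_le (hg : IsQuasiLinear g δ) (hδ : 0 ≤ δ)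
    (hb : ∀ A, ‖g (indicatorStep A)‖ ≤ b) {t : stepFunctions Γ} {φ : ℝ → ℝ}
    (hφ : ∀ γ, φ (t.1 γ) ∈ Set.Icc 0 1) :
    2 * ‖g (stepComp φ t)‖ ≤ 2 * δ + b + ‖g (stepComp (binaryShift ∘ φ) t)‖ := by
  set A : Set Γ := {γ | 1 / 2 ≤ φ (t.1 γ)}
  set s := stepComp (binaryShift ∘ φ) t
  have norm_s : ‖s‖ ≤ 1 := norm_stepFunctions_le_one_of_mem_Icc fun γ => by
    rw [stepComp_apply]
    exact binaryShift_mem_Icc (hφ γ)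
  calc 2 * ‖g (stepComp φ t)‖ = ‖g (indicatorStep A + s)‖ := by
        rw [← two_smul_stepComp, hg.map_smul, norm_smul, Real.norm_two]
    _ ≤ ‖g (indicatorStep A)‖ + ‖g s‖ + δ * (‖indicatorStep A‖ + ‖s‖) := hg.norm_map_add_le _ _
    _ ≤ b + ‖g s‖ + δ * (1 + 1) := by gcongr; exacts [hb A, norm_indicatorStep_le_one A]
    _ = 2 * δ + b + ‖g s‖ := by ring

lemma IsQuasiLinear.norm_map_le_of_mem_Icc (hg : IsQuasiLinear g δ) (hδ : 0 ≤ δ)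
    (hb : ∀ A, ‖g (indicatorStep A)‖ ≤ b) {t : stepFunctions Γ}
    (ht : ∀ γ, t.1 γ ∈ Set.Icc 0 1) : ‖g t‖ ≤ 2 * δ + b := by
  obtain ⟨C, hC⟩ := hg.exists_norm_map_sum_smul_le (finite_range_stepFunctions t).toFinset
    fun c => indicatorStep ((t.1 : Γ → ℝ) ⁻¹' {c})
  let S : Set (ℝ → ℝ) := {φ | ∀ γ, φ (t.1 γ) ∈ Set.Icc 0 1}
  have bounded : ∀ φ ∈ S, ‖g (stepComp φ t)‖ ≤ C := fun φ hφ => hC φ fun c hc => by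
    obtain ⟨γ, rfl⟩ := (finite_range_stepFunctions t).mem_toFinset.1 hc
    exact (abs_of_nonneg (hφ γ).1).trans_le (hφ γ).2
  have halving : ∀ φ ∈ S, ∃ ψ ∈ S,
      2 * ‖g (stepComp φ t)‖ ≤ 2 * δ + b + ‖g (stepComp ψ t)‖ := fun φ hφ =>
    ⟨binaryShift ∘ φ, fun γ => binaryShift_mem_Icc (hφ γ),
      hg.two_mul_norm_map_stepComp_le hδ hb hφ⟩
  have stepComp_id : stepComp id t = t := stepFunctions_ext fun γ => stepComp_apply id t γ
  simpa only [stepComp_id] using le_of_forall_exists_two_mul_le_add bounded halving id ht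

lemma IsQuasiLinear.norm_map_le_of_norm_indicatorStep_le (hg : IsQuasiLinear g δ) (hδ : 0 ≤ δ)
    (hb : ∀ A, ‖g (indicatorStep A)‖ ≤ b) (t : stepFunctions Γ) :
    ‖g t‖ ≤ (6 * δ + 2 * b) * ‖t‖ := by
  refine hg.norm_map_le_of_forall_norm_le_one (fun t ht => ?_) t
  have abs_le_one (γ : Γ) : |t.1 γ| ≤ 1 := (abs_stepFunctions_apply_le t γ).trans ht
  have posPart_mem (γ : Γ) : (stepComp (·⁺) t).1 γ ∈ Set.Icc 0 1 := by
    rw [stepComp_apply]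
    exact ⟨posPart_nonneg _, sup_le ((le_abs_self _).trans (abs_le_one γ)) zero_le_one⟩
  have negPart_mem (γ : Γ) : (stepComp (·⁻) t).1 γ ∈ Set.Icc 0 1 := by
    rw [stepComp_apply]
    exact ⟨negPart_nonneg _, sup_le ((neg_le_abs _).trans (abs_le_one γ)) zero_le_one⟩
  set p := stepComp (·⁺) t
  set n := stepComp (·⁻) t
  calc ‖g t‖ = ‖g (p + (-1 : ℝ) • n)‖ := by rw [stepComp_posPart_add_neg_stepComp_negPart]
    _ ≤ ‖g p‖ + ‖g ((-1 : ℝ) • n)‖ + δ * (‖p‖ + ‖(-1 : ℝ) • n‖) := hg.norm_map_add_le _ _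
    _ = ‖g p‖ + ‖g n‖ + δ * (‖p‖ + ‖n‖) := by rw [hg.map_smul]; simp
    _ ≤ (2 * δ + b) + (2 * δ + b) + δ * (1 + 1) := by
        gcongr
        exacts [hg.norm_map_le_of_mem_Icc hδ hb posPart_mem,
          hg.norm_map_le_of_mem_Icc hδ hb negPart_mem,
          norm_stepFunctions_le_one_of_mem_Icc posPart_mem,
          norm_stepFunctions_le_one_of_mem_Icc negPart_mem]
    _ = 6 * δ + 2 * b := by ring

end BoundedOnIndicators

section Integration

open MeasureTheory

variable {Γ : Type}

/-- A step function as a simple function for the discrete σ-algebra, which gives access to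
`SimpleFunc.setToSimpleFunc`. -/
def stepToSimpleFunc (t : stepFunctions Γ) : @SimpleFunc Γ ⊤ ℝ :=
  @SimpleFunc.mk Γ ⊤ ℝ t.1 (fun _ => trivial) (finite_range_stepFunctions t)

variable {X : Type*} [NormedAddCommGroup X] [NormedSpace ℝ X]

-- The zero measure serves only to make every simple function integrable in the additivity
-- results for `setToSimpleFunc`.
lemma finMeasAdditive_toSpanSingleton {μ : Set Γ → X} (hμ : VectMeas Set.univ μ) :
    FinMeasAdditive (0 : @Measure Γ ⊤)
      fun A => ContinuousLinearMap.toSpanSingleton ℝ (μ A) := by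
  intro A B _ _ _ _ hAB
  ext
  simp [hμ A trivial B trivial hAB]

/-- Integration of step functions against a finitely additive vector measure defined on all
subsets of `Γ`. -/
noncomputable def stepIntegral (μ : Set Γ → X) (hμ : VectMeas Set.univ μ) :
    stepFunctions Γ →ₗ[ℝ] X where
  toFun t := SimpleFunc.setToSimpleFunc
    (fun A => ContinuousLinearMap.toSpanSingleton ℝ (μ A)) (stepToSimpleFunc t)
  map_add' s t := by
    change SimpleFunc.setToSimpleFunc _ (stepToSimpleFunc s + stepToSimpleFunc t) = _
    exact SimpleFunc.setToSimpleFunc_add _ (finMeasAdditive_toSpanSingleton hμ)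
      integrable_zero_measure integrable_zero_measure
  map_smul' a t := by
    change SimpleFunc.setToSimpleFunc _ (a • stepToSimpleFunc t) = _
    exact SimpleFunc.setToSimpleFunc_smul_real _ (finMeasAdditive_toSpanSingleton hμ) a
      integrable_zero_measure

lemma stepIntegral_indicatorStep {μ : Set Γ → X} (hμ : VectMeas Set.univ μ) (A : Set Γ) :
    stepIntegral μ hμ (indicatorStep A) = μ A := by
  classical
  let _ : MeasurableSpace Γ := ⊤
  have μ_empty : μ ∅ = 0 := by simpa using hμ ∅ trivial ∅ trivial disjoint_bot_left
  have toSimpleFunc_eq : stepToSimpleFunc (indicatorStep A) = SimpleFunc.piecewise A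
      MeasurableSpace.measurableSet_top (SimpleFunc.const Γ 1) (SimpleFunc.const Γ 0) := by
    ext γ
    rw [SimpleFunc.piecewise_apply]
    exact Set.indicator_apply A (fun _ => (1 : ℝ)) γ
  change SimpleFunc.setToSimpleFunc
    (fun A => ContinuousLinearMap.toSpanSingleton ℝ (μ A)) (stepToSimpleFunc (indicatorStep A)) = _
  rw [toSimpleFunc_eq, SimpleFunc.setToSimpleFunc_indicator _ (by simp [μ_empty])]
  simp

end Integration

lemma IsQuasiLinear.oneAdd_inv_smul_map_indicatorStep {Γ : Type} {X : Type*}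
    [SeminormedAddCommGroup X] [NormedSpace ℝ X] {f : stepFunctions Γ → X} {δ : ℝ}
    (hf : IsQuasiLinear f δ) (hδ : 0 < δ) (F : Set (Set Γ)) :
    OneAdd F fun A => (2 * δ)⁻¹ • f (indicatorStep A) := by
  intro A _ B _ hAB
  beta_reduce
  rw [indicatorStep_union hAB, ← smul_sub, ← smul_sub, norm_smul,
    Real.norm_of_nonneg (by positivity), inv_mul_le_one₀ (by positivity)]
  calc _ ≤ δ * (‖indicatorStep A‖ + ‖indicatorStep B‖) := hf.norm_map_add_sub_sub_le _ _
    _ ≤ δ * (1 + 1) := by gcongr <;> exact norm_indicatorStep_le_one _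
    _ = 2 * δ := by ring

theorem stmt_7_general {Γ : Type} {X : Type*} [NormedAddCommGroup X] [NormedSpace ℝ X] {w : ℝ}
    (hX : ∀ ν : Set Γ → X, OneAdd Set.univ ν →
      ∃ μ : Set Γ → X, VectMeas Set.univ μ ∧ ∀ A, ‖ν A - μ A‖ ≤ w)
    {f : stepFunctions Γ → X} {δ : ℝ} (hf : IsQuasiLinear f δ) :
    ∃ h : stepFunctions Γ →ₗ[ℝ] X, ∀ t, ‖f t - h t‖ ≤ 2 * δ * (3 + 2 * w) * ‖t‖ := by
  rcases le_or_gt δ 0 with hδ | hδ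
  · have w_nonneg : 0 ≤ w := by
      obtain ⟨μ, -, hμ⟩ := hX 0 (by simp [OneAdd])
      exact (norm_nonneg _).trans (hμ ∅)
    obtain ⟨h, hh⟩ := hf.exists_linearMap_eq_of_nonpos hδ
    refine ⟨h, fun t => ?_⟩
    rw [hh, sub_self, norm_zero]
    nlinarith [hf.mul_norm_nonneg t]
  · obtain ⟨μ, hμ, hμw⟩ := hX _ (hf.oneAdd_inv_smul_map_indicatorStep hδ Set.univ)
    let h : stepFunctions Γ →ₗ[ℝ] X := (2 * δ) • stepIntegral μ hμ
    have norm_le_on_indicators (A : Set Γ) :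
        ‖f (indicatorStep A) - h (indicatorStep A)‖ ≤ 2 * δ * w := by
      calc ‖f (indicatorStep A) - h (indicatorStep A)‖
          = ‖(2 * δ) • ((2 * δ)⁻¹ • f (indicatorStep A) - μ A)‖ := by
            rw [smul_sub, smul_inv_smul₀ (by positivity), LinearMap.smul_apply,
              stepIntegral_indicatorStep]
        _ ≤ 2 * δ * w := by
            rw [norm_smul, Real.norm_of_nonneg (by positivity)]
            gcongr
            exact hμw A
    refine ⟨h, fun t => ?_⟩
    convert (hf.sub_linearMap h).norm_map_le_of_norm_indicatorStep_le hδ.le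
      norm_le_on_indicators t using 2
    ring

/-- if X has the (2^|Γ|)⁺-SVM property with constant w, then every
quasi-linear map from the step functions of ℓ∞(Γ) into X with constant δ is at
distance ≤ 4δ(2+v) from a linear map, for every v > w. -/
theorem stmt_7 (Γ : Type)
    (X : Type) [NormedAddCommGroup X] [NormedSpace ℝ X] [CompleteSpace X]
    (w : ℝ)
    (hX : ∀ (Ω : Type) (F : Set (Set Ω)), IsSetAlg F → #(↥F) ≤ 2 ^ #Γ →
      ∀ ν : Set Ω → X, OneAdd F ν →
        ∃ μ : Set Ω → X, VectMeas F μ ∧ ∀ A ∈ F, ‖ν A - μ A‖ ≤ w)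
    (f : ↥(stepFunctions Γ) → X) (δ : ℝ)
    (hf1 : ∀ (a : ℝ) (t : ↥(stepFunctions Γ)), f (a • t) = a • f t)
    (hf2 : ∀ t s : ↥(stepFunctions Γ), ‖f (t + s) - f t - f s‖ ≤ δ * (‖t‖ + ‖s‖))
    (v : ℝ) (hv : w < v) :
    ∃ h : ↥(stepFunctions Γ) →ₗ[ℝ] X,
      ∀ t : ↥(stepFunctions Γ), ‖f t - h t‖ ≤ 4 * δ * (2 + v) * ‖t‖ := by
  have hf : IsQuasiLinear f δ := ⟨hf1, hf2⟩
  obtain ⟨h, hh⟩ := stmt_7_general (fun ν hν => by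
    simpa using hX Γ Set.univ (by simp [IsSetAlg]) (by simp) ν hν) hf
  refine ⟨h, fun t => (hh t).trans ?_⟩
  have hδt : 0 ≤ δ * ‖t‖ := hf.mul_norm_nonneg t
  nlinarith
end
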